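/- For every n ≥ 1 the dual canonical basis elements satisfy B[n,0,0,n−1] = q^{n−1} u₃ B[n−1,0,0,n−1] − q^{2n−1} u₂ B[n−1,0,1,n−2] = q^{3n−3} B[n−1,0,0,n−1] u₃ − q^{2n−3} B[n−1,0,1,n−2] u₂. -/

import Mathlib

noncomputable section

abbrev F : Type := RatFunc ℚ

/-- The deformation parameter `q`. -/
def qq : F := RatFunc.X

/-- The quantum integer `[3] = q² + 1 + q⁻²`. -/
def box3 : F := qq ^ 2 + 1 + (qq⁻¹) ^ 2

/-- The generators `E₁, E₂` of the free algebra. -/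
def gen (i : Fin 2) : FreeAlgebra F (Fin 2) := FreeAlgebra.ι F i

/-- The quantized Serre relations. -/
inductive SerreRel : FreeAlgebra F (Fin 2) → FreeAlgebra F (Fin 2) → Prop
  | rel1 : SerreRel
      (gen 0 ^ 3 * gen 1 - box3 • (gen 0 ^ 2 * gen 1 * gen 0)
        + box3 • (gen 0 * gen 1 * gen 0 ^ 2) - gen 1 * gen 0 ^ 3) 0
  | rel2 : SerreRel
      (gen 1 ^ 3 * gen 0 - box3 • (gen 1 ^ 2 * gen 0 * gen 1)
        + box3 • (gen 1 * gen 0 * gen 1 ^ 2) - gen 0 * gen 1 ^ 3) 0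

/-- `U = U_q(𝔫)`, the free algebra on `E₁, E₂` modulo the quantized Serre relations. -/
abbrev U : Type := RingQuot SerreRel

def E1 : U := RingQuot.mkAlgHom F SerreRel (gen 0)
def E2 : U := RingQuot.mkAlgHom F SerreRel (gen 1)

/-- `A = (1/(q+q⁻¹))(E₂E₁ − q⁻²E₁E₂)`. -/
def Aelt : U := (qq + qq⁻¹)⁻¹ • (E2 * E1 - (qq⁻¹) ^ 2 • (E1 * E2))

def v0 : U := E1
def v1 : U := Aelt * v0 - v0 * Aelt
def v2 : U := Aelt * v1 - v1 * Aelt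
def v3 : U := Aelt * v2 - v2 * Aelt

/-- `uᵢ = (1 − q⁻²)⁻²ⁱ vᵢ`. -/
def u0 : U := v0
def u1 : U := ((1 - (qq⁻¹) ^ 2)⁻¹) ^ 2 • v1
def u2 : U := ((1 - (qq⁻¹) ^ 2)⁻¹) ^ 4 • v2
def u3 : U := ((1 - (qq⁻¹) ^ 2)⁻¹) ^ 6 • v3

/-- `p₁ = u₃u₁ − q²u₂²`. -/
def p1 : U := u3 * u1 - qq ^ 2 • u2 ^ 2
/-- `p₀ = u₂u₀ − q²u₁²`. -/
def p0 : U := u2 * u0 - qq ^ 2 • u1 ^ 2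

/-- `S`, the subalgebra of `U` generated by `u₀, u₁, u₂, u₃`. -/
abbrev Sgen : Subalgebra F U := Algebra.adjoin F ({u0, u1, u2, u3} : Set U)

def us0 : Sgen := ⟨u0, Algebra.subset_adjoin (by simp)⟩
def us1 : Sgen := ⟨u1, Algebra.subset_adjoin (by simp)⟩
def us2 : Sgen := ⟨u2, Algebra.subset_adjoin (by simp)⟩
def us3 : Sgen := ⟨u3, Algebra.subset_adjoin (by simp)⟩

/-- `p₁ = u₃u₁ − q²u₂²` as an element of `S`. -/
def ps1 : Sgen := us3 * us1 - qq ^ 2 • us2 ^ 2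
/-- `p₀ = u₂u₀ − q²u₁²` as an element of `S`. -/
def ps0 : Sgen := us2 * us0 - qq ^ 2 • us1 ^ 2

/-- Index quadruples `a = (a₃, a₂, a₁, a₀)`. -/
abbrev Idx : Type := ℕ × ℕ × ℕ × ℕ

/-- The PBW monomial `u₃^{a₃}u₂^{a₂}u₁^{a₁}u₀^{a₀}`. -/
def mon (a : Idx) : Sgen := us3 ^ a.1 * us2 ^ a.2.1 * us1 ^ a.2.2.1 * us0 ^ a.2.2.2

/-- `b(a) = C(a₃,2)+C(a₂,2)+C(a₁,2)+C(a₀,2)`. -/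
def bexp (a : Idx) : ℕ :=
  Nat.choose a.1 2 + Nat.choose a.2.1 2 + Nat.choose a.2.2.1 2 + Nat.choose a.2.2.2 2

/-- The dual PBW basis element `E[a] = q^{b(a)} u₃^{a₃}u₂^{a₂}u₁^{a₁}u₀^{a₀}`. -/
def Ee (a : Idx) : Sgen := qq ^ bexp a • mon a

/-- `N(a) = (a₃+a₂+a₁+a₀)² − 7a₃ − 5a₂ − 3a₁ − a₀`. -/
def Nnum (a : Idx) : ℤ :=
  ((a.1 : ℤ) + a.2.1 + a.2.2.1 + a.2.2.2) ^ 2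
    - 7 * a.1 - 5 * a.2.1 - 3 * a.2.2.1 - a.2.2.2

/-- `a ⊴ b` iff `b − a ∈ ℕ·(−1,2,−1,0) + ℕ·(0,−1,2,−1)`. -/
def tri (a b : Idx) : Prop :=
  ∃ s r : ℕ,
    (b.1 : ℤ) = a.1 - s ∧
    (b.2.1 : ℤ) = a.2.1 + 2 * s - r ∧
    (b.2.2.1 : ℤ) = a.2.2.1 - s + 2 * r ∧
    (b.2.2.2 : ℤ) = a.2.2.2 - r

/-- `S(a) = {b ∈ ℕ⁴ : a ⊴ b and a ≠ b}`. -/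
def Sset (a : Idx) : Set Idx := {b | tri a b ∧ a ≠ b}

/-- Condition (i): `B[a] − E[a] ∈ Σ_{b ∈ S(a)} qℤ[q]·E[b]`. -/
def cond1 (B : Idx → Sgen) (a : Idx) : Prop :=
  ∃ φ : Idx →₀ Polynomial ℤ,
    (↑φ.support : Set Idx) ⊆ Sset a ∧
    B a - Ee a =
      φ.sum fun b p => (qq * Polynomial.eval₂ (Int.castRingHom F) qq p) • Ee b

/-- Hypotheses on the bar involution of coefficients `bar : q ↦ q⁻¹` and on the
anti-automorphism `σ` of `S`: `σ` is an additive, anti-multiplicative bijection with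
`σ(c(q)·x) = c(q⁻¹)·σ(x)` and `σ(uᵢ) = q^{2i}uᵢ`. -/
def SigmaHyp (bar : F →+* F) (σ : Sgen → Sgen) : Prop :=
  bar qq = qq⁻¹ ∧
  Function.Bijective σ ∧
  (∀ x y : Sgen, σ (x + y) = σ x + σ y) ∧
  (∀ x y : Sgen, σ (x * y) = σ y * σ x) ∧
  (∀ (c : F) (x : Sgen), σ (c • x) = bar c • σ x) ∧
  σ us0 = us0 ∧ σ us1 = qq ^ 2 • us1 ∧ σ us2 = qq ^ 4 • us2 ∧ σ us3 = qq ^ 6 • us3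

/-- The defining properties of the dual canonical basis `B`: for every `a ∈ ℕ⁴`,
`B[a] − E[a] ∈ Σ_{b ∈ S(a)} qℤ[q]·E[b]` and `σ(B[a]) = q^{−N(a)}B[a]`. -/
def DCB (bar : F →+* F) (σ : Sgen → Sgen) (B : Idx → Sgen) : Prop :=
  ∀ a : Idx, cond1 B a ∧ σ (B a) = qq ^ (-Nnum a) • B a

/-- Extension of `B` to integer quadruples by the convention that `B[a] = 0` whenever
some coordinate of `a` is negative. -/
def Bz (B : Idx → Sgen) (a : ℤ × ℤ × ℤ × ℤ) : Sgen :=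
  if 0 ≤ a.1 ∧ 0 ≤ a.2.1 ∧ 0 ≤ a.2.2.1 ∧ 0 ≤ a.2.2.2 then
    B (a.1.toNat, a.2.1.toNat, a.2.2.1.toNat, a.2.2.2.toNat)
  else 0

/-!
The element `B[a]` is the only `σ`-eigenvector with eigenvalue `q^{-N(a)}` that is unitriangular
in the dual PBW basis, because no nonzero element of `qℤ[q]` is fixed by `q ↦ q⁻¹`. For `S(a) = ∅`
this forces `σ(E[a]) = q^{-N(a)} E[a]`, which for `a = (0,0,1,1), (0,1,1,0), (1,1,0,0)` is the
`q`-commutation of neighbouring generators; applying the derivation `[A, ·]` to it yields the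
remaining straightening relations.

Put `P = u₃u₀ - q²u₂u₁` and `Q = q²p₀p₁`. These commute, so they have a Lucas sequence `U₀ = 0`,
`U₁ = 1`, `Uₙ₊₂ = P Uₙ₊₁ - Q Uₙ`. Up to powers of `q`, `B[n,0,0,n]` is `Uₙ₊₁`, `B[n+1,0,1,n]` is
`p₁ Uₙ₊₁`, and `B[n+1,0,0,n]` is `u₃ Uₙ₊₁ - q² u₂ p₁ Uₙ`. The last element can equally be written
with `u₃` and `u₂` on the right, since it obeys a left and a right recurrence, and the two
expressions are the two formulas to be proved. Both unitriangularity and the `σ`-eigenvalue of the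
candidates follow by induction on `n`.
-/

/-! ### Lucas sequences in an algebra -/

section Lucas

/-- The Lucas sequence `U₀ = 0`, `U₁ = 1`, `Uₙ₊₂ = P Uₙ₊₁ - Q Uₙ` of two elements of a (not
necessarily commutative) ring. -/
def lucasU {R : Type*} [Ring R] (P Q : R) : ℕ → R
  | 0 => 0
  | 1 => 1
  | n + 2 => P * lucasU P Q (n + 1) - Q * lucasU P Q n

variable {K R : Type*} [Field K] [Ring R] [Algebra K R] {P Q w : R}

theorem lucasU_add_two (n : ℕ) :
    lucasU P Q (n + 2) = P * lucasU P Q (n + 1) - Q * lucasU P Q n := rfl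

theorem commute_lucasU (hP : Commute w P) (hQ : Commute w Q) (n : ℕ) :
    Commute w (lucasU P Q n) := by
  induction n using Nat.twoStepInduction with
  | zero => exact Commute.zero_right w
  | one => exact Commute.one_right w
  | more n ih ih' => exact (hP.mul_right ih').sub_right (hQ.mul_right ih)

theorem lucasU_add_two_right (hPQ : Commute P Q) (n : ℕ) :
    lucasU P Q (n + 2) = lucasU P Q (n + 1) * P - lucasU P Q n * Q := by
  rw [lucasU, (commute_lucasU (Commute.refl P) hPQ _).eq,
    (commute_lucasU hPQ.symm (Commute.refl Q) _).eq]

theorem mul_lucasU_succ {k : K} (hP : w * P = k • (P * w)) (hQ : w * Q = k ^ 2 • (Q * w)) (n : ℕ) :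
    w * lucasU P Q (n + 1) = k ^ n • (lucasU P Q (n + 1) * w) := by
  induction n using Nat.twoStepInduction with
  | zero => simp [lucasU]
  | one => simp [lucasU, hP]
  | more n ih ih' =>
    calc w * lucasU P Q (n + 3)
        = w * P * lucasU P Q (n + 2) - w * Q * lucasU P Q (n + 1) := by
          rw [lucasU, mul_sub, mul_assoc, mul_assoc]
      _ = k • (P * (w * lucasU P Q (n + 2))) - k ^ 2 • (Q * (w * lucasU P Q (n + 1))) := by
          rw [hP, hQ, smul_mul_assoc, smul_mul_assoc, mul_assoc, mul_assoc]
      _ = k ^ (n + 2) • (lucasU P Q (n + 3) * w) := by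
          rw [ih, ih', lucasU_add_two (n + 1), sub_mul]
          simp only [mul_smul_comm, mul_assoc]
          module

theorem op_lucasU (hPQ : Commute P Q) (n : ℕ) :
    MulOpposite.op (lucasU P Q n) = lucasU (MulOpposite.op P) (MulOpposite.op Q) n := by
  induction n using Nat.twoStepInduction with
  | zero => rfl
  | one => rfl
  | more n ih ih' =>
    rw [lucasU_add_two_right hPQ, lucasU, ← ih, ← ih', MulOpposite.op_sub, MulOpposite.op_mul,
      MulOpposite.op_mul]

theorem recurrence_intertwine {X : ℕ → R} {α β : K} (hPQ : Commute P Q)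
    (hX : ∀ m, X (m + 2) = X (m + 1) * P - X m * Q)
    (h0 : α • X 1 = X 0 * P - β • (P * X 0)) (h1 : α • X 2 = X 1 * P - β • (P * X 1)) (m : ℕ) :
    α • X (m + 1) = X m * P - β • (P * X m) := by
  induction m using Nat.twoStepInduction with
  | zero => exact h0
  | one => exact h1
  | more m ih ih' =>
    calc α • X (m + 3) = α • X (m + 2) * P - α • X (m + 1) * Q := by
          rw [hX, smul_sub, smul_mul_assoc, smul_mul_assoc]
      _ = X (m + 2) * P - β • (P * X (m + 2)) := by
          rw [ih, ih', hX m]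
          simp only [sub_mul, mul_sub, smul_mul_assoc, mul_assoc, smul_sub, hPQ.eq]
          abel

/-- The combination `a Uₘ₊₁ - D e Uₘ` of two consecutive terms of a Lucas sequence. -/
def lucasComb (D : K) (a e P Q : R) (m : ℕ) : R :=
  a * lucasU P Q (m + 1) - D • (e * lucasU P Q m)

variable {D : K} {a e : R}

theorem lucasComb_zero : lucasComb D a e P Q 0 = a := by
  simp [lucasComb, lucasU]

theorem lucasComb_one : lucasComb D a e P Q 1 = a * P - D • e := by
  simp [lucasComb, lucasU]

theorem lucasComb_add_two (hPQ : Commute P Q) (m : ℕ) :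
    lucasComb D a e P Q (m + 2) = lucasComb D a e P Q (m + 1) * P - lucasComb D a e P Q m * Q := by
  simp only [lucasComb]
  rw [lucasU_add_two_right hPQ (m + 1), lucasU_add_two_right hPQ m]
  simp only [mul_sub, sub_mul, smul_mul_assoc, mul_assoc]
  module

theorem lucasComb_mul_eq_smul {k : K} (hPQ : Commute P Q) (ha : a * Q = k • (Q * a))
    (he : e * Q = k • (Q * e)) (m : ℕ) :
    lucasComb D a e P Q m * Q = k • (Q * lucasComb D a e P Q m) := by
  have hU (n : ℕ) : lucasU P Q n * Q = Q * lucasU P Q n :=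
    (commute_lucasU hPQ.symm (Commute.refl Q) n).symm.eq
  simp only [lucasComb, sub_mul, mul_sub, smul_mul_assoc, mul_smul_comm, mul_assoc, hU]
  simp only [← mul_assoc, ha, he, smul_mul_assoc]
  module

theorem lucasComb_add_two_left (hD : D ≠ 0) (hPQ : Commute P Q)
    (hPa : D • (P * a) - a * P = (1 - D) • e)
    (hPb : D • (P * (a * P - D • e)) - (a * P - D • e) * P = (D⁻¹ - 1) • (a * Q))
    (haQ : a * Q = D ^ 3 • (Q * a)) (heQ : e * Q = D ^ 3 • (Q * e)) (m : ℕ) :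
    lucasComb D a e P Q (m + 2)
      = D • (P * lucasComb D a e P Q (m + 1)) - D ^ 2 • (Q * lucasComb D a e P Q m) := by
  set X := lucasComb D a e P Q with hX
  have hrec (m : ℕ) : X (m + 2) = X (m + 1) * P - X m * Q := lucasComb_add_two hPQ m
  have intertwine : (1 - D) • X (m + 2) = X (m + 1) * P - D ^ 2 • (P * X (m + 1)) := by
    refine recurrence_intertwine (m := m + 1) hPQ hrec ?_ ?_
    · rw [hX, lucasComb_one, lucasComb_zero, smul_sub, smul_comm, ← hPa]
      module
    · rw [hrec 0, zero_add, hX, lucasComb_one, lucasComb_zero, smul_sub,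
        show (1 - D) • (a * Q) = D • (D⁻¹ - 1) • (a * Q) by rw [smul_smul]; congr 1; field_simp,
        ← hPb]
      module
  have hXQ : X m * Q = D ^ 3 • (Q * X m) := lucasComb_mul_eq_smul hPQ haQ heQ m
  rw [← sub_eq_zero, ← smul_eq_zero_iff_right hD]
  have hXP : X (m + 1) * P = X (m + 2) + D ^ 3 • (Q * X m) := by rw [hrec, hXQ]; abel
  rw [hXP] at intertwine
  linear_combination (norm := module) -intertwine

theorem lucasComb_eq_smul (hD : D ≠ 0) (hPQ : Commute P Q)
    (hPa : D • (P * a) - a * P = (1 - D) • e)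
    (hPb : D • (P * (a * P - D • e)) - (a * P - D • e) * P = (D⁻¹ - 1) • (a * Q))
    (haQ : a * Q = D ^ 3 • (Q * a)) (heQ : e * Q = D ^ 3 • (Q * e)) (m : ℕ) :
    lucasComb D a e P Q m
      = D ^ m • (lucasU P Q (m + 1) * a - D⁻¹ • (lucasU P Q m * e)) := by
  induction m using Nat.twoStepInduction with
  | zero => simp [lucasComb, lucasU]
  | one =>
    have haP : a * P = D • (P * a) - (1 - D) • e := by rw [← hPa]; abel
    rw [lucasComb_one, haP]
    simp only [lucasU, mul_one, mul_zero, sub_zero, one_mul]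
    match_scalars <;> field_simp
    ring
  | more m ih ih' =>
    rw [lucasComb_add_two_left hD hPQ hPa hPb haQ heQ, ih, ih', lucasU_add_two (m + 1),
      lucasU_add_two m]
    simp only [mul_sub, sub_mul, mul_smul_comm, mul_assoc]
    match_scalars <;> field_simp <;> ring

end Lucas

/-! ### The straightening relations -/

section Straightening

open MulOpposite

variable {K R : Type*} [Field K] [Ring R] [Algebra K R]

/-- The relations that reorder products of `u₀, u₁, u₂, u₃` into PBW order, with `d = q²`. -/
structure StraighteningRel (d : K) (x : Fin 4 → R) : Prop where
  ne_zero : d ≠ 0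
  x01 : x 0 * x 1 = d⁻¹ • (x 1 * x 0)
  x12 : x 1 * x 2 = d⁻¹ • (x 2 * x 1)
  x23 : x 2 * x 3 = d⁻¹ • (x 3 * x 2)
  x02 : x 0 * x 2 = d⁻¹ • (x 2 * x 0) + (d⁻¹ - 1) • (x 1 * x 1)
  x13 : x 1 * x 3 = d⁻¹ • (x 3 * x 1) + (d⁻¹ - 1) • (x 2 * x 2)
  x03 : x 0 * x 3 = d⁻¹ • (x 3 * x 0) + (d⁻¹ ^ 2 - 1) • (x 2 * x 1)

/-- The generators in reverse order, in the opposite algebra. This is a symmetry of the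
straightening relations, exchanging `p₁` and `p₀`, `u₃` and `u₀`, `u₂` and `u₁`. -/
def opRev (x : Fin 4 → R) : Fin 4 → Rᵐᵒᵖ := fun i => op (x i.rev)

/-- The quantum minor `p₁ = u₃u₁ - d u₂²`. -/
def upperMinor (d : K) (x : Fin 4 → R) : R := x 3 * x 1 - d • x 2 ^ 2

/-- The quantum minor `p₀ = u₂u₀ - d u₁²`. -/
def lowerMinor (d : K) (x : Fin 4 → R) : R := x 2 * x 0 - d • x 1 ^ 2

/-- The quantum minor `u₃u₀ - d u₂u₁`. -/
def middleMinor (d : K) (x : Fin 4 → R) : R := x 3 * x 0 - d • (x 2 * x 1)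

/-- The second parameter `d p₀p₁` of the Lucas sequence `minorSeq`. -/
def minorProd (d : K) (x : Fin 4 → R) : R := d • (lowerMinor d x * upperMinor d x)

/-- The Lucas sequence of `u₃u₀ - d u₂u₁` and `d p₀p₁`. Up to a power of `q`, its term of index
`n + 1` is the dual canonical basis element `B[n,0,0,n]`. -/
def minorSeq (d : K) (x : Fin 4 → R) : ℕ → R := lucasU (middleMinor d x) (minorProd d x)

/-- The combination `u₃ Uₘ₊₁ - d u₂p₁ Uₘ` of terms of `U = minorSeq d x`. Up to a power of `q`, it
is the dual canonical basis element `B[m+1,0,0,m]`. -/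
def stepSeq (d : K) (x : Fin 4 → R) : ℕ → R :=
  lucasComb d (x 3) (x 2 * upperMinor d x) (middleMinor d x) (minorProd d x)

variable {d : K} {x : Fin 4 → R}

theorem minorSeq_add_two (n : ℕ) :
    minorSeq d x (n + 2) = middleMinor d x * minorSeq d x (n + 1)
      - minorProd d x * minorSeq d x n :=
  rfl

theorem stepSeq_eq (m : ℕ) :
    stepSeq d x m = x 3 * minorSeq d x (m + 1) - d • (x 2 * upperMinor d x * minorSeq d x m) :=
  rfl

namespace StraighteningRel

theorem base_ne_zero {q : K} (H : StraighteningRel (q ^ 2) x) : q ≠ 0 :=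
  (pow_ne_zero_iff two_ne_zero).mp H.ne_zero

theorem map_opRev (H : StraighteningRel d x) : StraighteningRel d (opRev x) where
  ne_zero := H.ne_zero
  x01 := congrArg op H.x23
  x12 := congrArg op H.x12
  x23 := congrArg op H.x01
  x02 := congrArg op H.x13
  x13 := congrArg op H.x02
  x03 := congrArg op H.x03

-- Bundled so that one `simp only` call brings every word in the generators into PBW order.
theorem straighten (H : StraighteningRel d x) :
    (x 0 * x 1 = d⁻¹ • (x 1 * x 0) ∧ ∀ y, x 0 * (x 1 * y) = d⁻¹ • (x 1 * (x 0 * y))) ∧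
    (x 1 * x 2 = d⁻¹ • (x 2 * x 1) ∧ ∀ y, x 1 * (x 2 * y) = d⁻¹ • (x 2 * (x 1 * y))) ∧
    (x 2 * x 3 = d⁻¹ • (x 3 * x 2) ∧ ∀ y, x 2 * (x 3 * y) = d⁻¹ • (x 3 * (x 2 * y))) ∧
    (x 0 * x 2 = d⁻¹ • (x 2 * x 0) + (d⁻¹ - 1) • (x 1 * x 1) ∧
      ∀ y, x 0 * (x 2 * y) = d⁻¹ • (x 2 * (x 0 * y)) + (d⁻¹ - 1) • (x 1 * (x 1 * y))) ∧
    (x 1 * x 3 = d⁻¹ • (x 3 * x 1) + (d⁻¹ - 1) • (x 2 * x 2) ∧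
      ∀ y, x 1 * (x 3 * y) = d⁻¹ • (x 3 * (x 1 * y)) + (d⁻¹ - 1) • (x 2 * (x 2 * y))) ∧
    (x 0 * x 3 = d⁻¹ • (x 3 * x 0) + (d⁻¹ ^ 2 - 1) • (x 2 * x 1) ∧
      ∀ y, x 0 * (x 3 * y) = d⁻¹ • (x 3 * (x 0 * y)) + (d⁻¹ ^ 2 - 1) • (x 2 * (x 1 * y))) := by
  refine ⟨⟨H.x01, fun y => ?_⟩, ⟨H.x12, fun y => ?_⟩, ⟨H.x23, fun y => ?_⟩, ⟨H.x02, fun y => ?_⟩,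
    ⟨H.x13, fun y => ?_⟩, H.x03, fun y => ?_⟩ <;>
  simp only [← mul_assoc, H.x01, H.x12, H.x23, H.x02, H.x13, H.x03, add_mul, smul_mul_assoc]

theorem upperMinor_mul_x3 (H : StraighteningRel d x) :
    upperMinor d x * x 3 = d⁻¹ • (x 3 * upperMinor d x) := by
  have hd := H.ne_zero
  simp only [upperMinor, pow_two, mul_sub, sub_mul, mul_add, smul_mul_assoc,
    mul_smul_comm, smul_sub, smul_smul, mul_assoc, H.straighten]
  match_scalars <;> field_simp
  ring

theorem upperMinor_mul_x2 (H : StraighteningRel d x) :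
    upperMinor d x * x 2 = x 2 * upperMinor d x := by
  simp only [upperMinor, pow_two, mul_sub, sub_mul, smul_mul_assoc,
    mul_smul_comm, mul_assoc, H.straighten]

theorem upperMinor_mul_x1 (H : StraighteningRel d x) :
    upperMinor d x * x 1 = d • (x 1 * upperMinor d x) := by
  have hd := H.ne_zero
  simp only [upperMinor, pow_two, mul_sub, sub_mul, smul_mul_assoc,
    mul_smul_comm, smul_sub, smul_add, smul_smul, mul_assoc, H.straighten]
  match_scalars <;> field_simp
  ring

theorem upperMinor_mul_x0 (H : StraighteningRel d x) :
    upperMinor d x * x 0 = d ^ 2 • (x 0 * upperMinor d x) := by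
  have hd := H.ne_zero
  simp only [upperMinor, pow_two, mul_sub, sub_mul, mul_add, smul_mul_assoc,
    mul_smul_comm, smul_sub, smul_add, smul_smul, mul_assoc, H.straighten]
  match_scalars <;> field_simp
  ring

theorem upperMinor_mul_middleMinor (H : StraighteningRel d x) :
    upperMinor d x * middleMinor d x = d • (middleMinor d x * upperMinor d x) := by
  have hd := H.ne_zero
  simp only [middleMinor, mul_sub, sub_mul, mul_smul_comm, smul_mul_assoc, mul_assoc]
  simp only [← mul_assoc, H.upperMinor_mul_x3, H.upperMinor_mul_x2, smul_mul_assoc]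
  simp only [mul_assoc, H.upperMinor_mul_x0, H.upperMinor_mul_x1, mul_smul_comm]
  match_scalars <;> field_simp

theorem upperMinor_mul_lowerMinor (H : StraighteningRel d x) :
    upperMinor d x * lowerMinor d x = d ^ 2 • (lowerMinor d x * upperMinor d x) := by
  simp only [lowerMinor, pow_two, mul_sub, sub_mul, mul_smul_comm, smul_mul_assoc, ← mul_assoc,
    H.upperMinor_mul_x2, H.upperMinor_mul_x1]
  simp only [mul_assoc, H.upperMinor_mul_x0, H.upperMinor_mul_x1, mul_smul_comm]
  module

theorem middleMinor_mul_x3 (H : StraighteningRel d x) :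
    middleMinor d x * x 3
      = d⁻¹ • (x 3 * middleMinor d x) + (d⁻¹ - 1) • (x 2 * upperMinor d x) := by
  have hd := H.ne_zero
  simp only [middleMinor, upperMinor, pow_two, mul_sub, sub_mul, mul_add, smul_mul_assoc,
    mul_smul_comm, smul_sub, smul_add, smul_smul, mul_assoc, H.straighten]
  match_scalars <;> field_simp
  ring

theorem middleMinor_mul_x2 (H : StraighteningRel d x) :
    middleMinor d x * x 2 = x 2 * middleMinor d x + (d⁻¹ - 1) • (upperMinor d x * x 1) := by
  have hd := H.ne_zero
  simp only [middleMinor, upperMinor, pow_two, mul_sub, sub_mul, mul_add, smul_mul_assoc,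
    mul_smul_comm, smul_sub, smul_smul, mul_assoc, H.straighten]
  match_scalars <;> field_simp
  ring

theorem x2_mul_middleMinor (H : StraighteningRel d x) :
    x 2 * middleMinor d x = upperMinor d x * x 1 + d⁻¹ • (x 3 * lowerMinor d x) := by
  have hd := H.ne_zero
  simp only [middleMinor, upperMinor, lowerMinor, pow_two, mul_sub, sub_mul,
    smul_mul_assoc, mul_smul_comm, smul_sub, smul_smul, mul_assoc, H.straighten]
  match_scalars <;> field_simp
  ring

theorem x2_mul_x1_mul_middleMinor (H : StraighteningRel d x) :
    d • (x 2 * x 1 * middleMinor d x) + minorProd d x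
      = d⁻¹ • (x 3 * (lowerMinor d x * x 1)) + x 2 * upperMinor d x * x 0 := by
  have hd := H.ne_zero
  simp only [minorProd, middleMinor, upperMinor, lowerMinor, pow_two, mul_sub, sub_mul, mul_add,
    smul_mul_assoc, mul_smul_comm, smul_sub, smul_add, smul_smul, mul_assoc, H.straighten]
  match_scalars <;> field_simp <;> ring

theorem x3_mul_lowerMinor (H : StraighteningRel d x) :
    x 3 * lowerMinor d x = d ^ 2 • (lowerMinor d x * x 3) :=
  op_injective H.map_opRev.upperMinor_mul_x0

theorem x2_mul_lowerMinor (H : StraighteningRel d x) :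
    x 2 * lowerMinor d x = d • (lowerMinor d x * x 2) :=
  op_injective H.map_opRev.upperMinor_mul_x1

theorem x1_mul_lowerMinor (H : StraighteningRel d x) :
    x 1 * lowerMinor d x = lowerMinor d x * x 1 :=
  op_injective H.map_opRev.upperMinor_mul_x2

theorem middleMinor_mul_lowerMinor (H : StraighteningRel d x) :
    middleMinor d x * lowerMinor d x = d • (lowerMinor d x * middleMinor d x) :=
  op_injective H.map_opRev.upperMinor_mul_middleMinor

theorem commute_middleMinor_minorProd (H : StraighteningRel d x) :
    Commute (middleMinor d x) (minorProd d x) := by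
  refine Commute.smul_right ?_ d
  rw [commute_iff_eq, ← mul_assoc, H.middleMinor_mul_lowerMinor, mul_assoc,
    H.upperMinor_mul_middleMinor, mul_smul_comm, smul_mul_assoc, mul_assoc]

theorem minorSeq_opRev (H : StraighteningRel d x) (n : ℕ) :
    minorSeq d (opRev x) n = op (minorSeq d x n) :=
  (op_lucasU H.commute_middleMinor_minorProd n).symm

theorem upperMinor_mul_minorSeq_succ (H : StraighteningRel d x) (k : ℕ) :
    upperMinor d x * minorSeq d x (k + 1) = d ^ k • (minorSeq d x (k + 1) * upperMinor d x) := by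
  refine mul_lucasU_succ H.upperMinor_mul_middleMinor ?_ k
  rw [minorProd, mul_smul_comm, ← mul_assoc, H.upperMinor_mul_lowerMinor, smul_mul_assoc,
    smul_mul_assoc, mul_assoc, smul_comm]

theorem x3_mul_minorProd (H : StraighteningRel d x) :
    x 3 * minorProd d x = d ^ 3 • (minorProd d x * x 3) := by
  have hd := H.ne_zero
  rw [minorProd, mul_smul_comm, ← mul_assoc, H.x3_mul_lowerMinor, smul_mul_assoc, smul_mul_assoc,
    mul_assoc (lowerMinor d x) (upperMinor d x), H.upperMinor_mul_x3, mul_smul_comm, mul_assoc]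
  match_scalars; field_simp

theorem x2_mul_upperMinor_mul_minorProd (H : StraighteningRel d x) :
    x 2 * upperMinor d x * minorProd d x = d ^ 3 • (minorProd d x * (x 2 * upperMinor d x)) := by
  rw [← H.upperMinor_mul_x2]
  simp only [minorProd, mul_smul_comm, smul_mul_assoc, mul_assoc]
  rw [← mul_assoc (x 2), H.x2_mul_lowerMinor, smul_mul_assoc, mul_smul_comm, mul_assoc,
    ← mul_assoc (upperMinor d x) (lowerMinor d x), H.upperMinor_mul_lowerMinor, smul_mul_assoc,
    H.upperMinor_mul_x2, ← H.upperMinor_mul_x2, mul_assoc]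
  module

theorem stepSeq_eq_smul (H : StraighteningRel d x) (m : ℕ) :
    stepSeq d x m = d ^ m • (minorSeq d x (m + 1) * x 3
      - d⁻¹ • (minorSeq d x m * (x 2 * upperMinor d x))) := by
  have hd := H.ne_zero
  have middle_x3 : d • (middleMinor d x * x 3) - x 3 * middleMinor d x
      = (1 - d) • (x 2 * upperMinor d x) := by
    rw [H.middleMinor_mul_x3]
    match_scalars <;> field_simp
    ring
  have middle_x2_upper : d • (middleMinor d x * (x 2 * upperMinor d x))
      - x 2 * upperMinor d x * middleMinor d x
      = (1 - d) • (upperMinor d x * x 1 * upperMinor d x) := by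
    rw [mul_assoc (x 2), H.upperMinor_mul_middleMinor, mul_smul_comm, ← mul_assoc, ← mul_assoc,
      H.middleMinor_mul_x2, add_mul, smul_mul_assoc]
    match_scalars <;> field_simp
    ring
  refine lucasComb_eq_smul hd H.commute_middleMinor_minorProd middle_x3 ?_ H.x3_mul_minorProd
    H.x2_mul_upperMinor_mul_minorProd m
  calc d • (middleMinor d x * (x 3 * middleMinor d x - d • (x 2 * upperMinor d x)))
        - (x 3 * middleMinor d x - d • (x 2 * upperMinor d x)) * middleMinor d x
      = (d • (middleMinor d x * x 3) - x 3 * middleMinor d x) * middleMinor d x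
        - d • (d • (middleMinor d x * (x 2 * upperMinor d x))
          - x 2 * upperMinor d x * middleMinor d x) := by
        simp only [mul_sub, sub_mul, smul_mul_assoc, mul_smul_comm, mul_assoc]
        module
    _ = (1 - d) • (d • ((x 2 * middleMinor d x - upperMinor d x * x 1) * upperMinor d x)) := by
        rw [middle_x3, middle_x2_upper, smul_mul_assoc, mul_assoc (x 2),
          H.upperMinor_mul_middleMinor, mul_smul_comm, sub_mul, mul_assoc (x 2)]
        module
    _ = (d⁻¹ - 1) • (x 3 * minorProd d x) := by
        rw [H.x2_mul_middleMinor, add_sub_cancel_left, minorProd, smul_mul_assoc, mul_smul_comm,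
          mul_assoc]
        match_scalars
        field_simp

theorem minorSeq_mul_x0_sub (H : StraighteningRel d x) (m : ℕ) :
    minorSeq d x (m + 1) * x 0 - d • (minorSeq d x m * (lowerMinor d x * x 1))
      = d ^ m • (x 0 * minorSeq d x (m + 1) - d⁻¹ • (lowerMinor d x * x 1 * minorSeq d x m)) := by
  have h := H.map_opRev.stepSeq_eq_smul m
  rw [stepSeq_eq, H.minorSeq_opRev, H.minorSeq_opRev] at h
  exact op_injective h

theorem upperMinor_mul_lowerMinor_mul_x1 (H : StraighteningRel d x) :
    upperMinor d x * (lowerMinor d x * x 1) = d ^ 2 • (x 1 * minorProd d x) := by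
  rw [← H.x1_mul_lowerMinor, ← mul_assoc, H.upperMinor_mul_x1, smul_mul_assoc, mul_assoc,
    H.upperMinor_mul_lowerMinor, minorProd, mul_smul_comm, mul_smul_comm]
  module

theorem stepSeq_mul_x0_sub (H : StraighteningRel d x) (m : ℕ) :
    stepSeq d x (m + 1) * x 0 - d • (stepSeq d x m * (lowerMinor d x * x 1))
      = d ^ (m + 1) • minorSeq d x (m + 3) := by
  have hd := H.ne_zero
  have lower_term : x 2 * upperMinor d x * (lowerMinor d x * x 1 * minorSeq d x m)
      = d ^ 2 • (x 2 * x 1 * (minorProd d x * minorSeq d x m)) := by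
    rw [mul_assoc (x 2), ← mul_assoc (upperMinor d x), H.upperMinor_mul_lowerMinor_mul_x1]
    simp only [smul_mul_assoc, mul_smul_comm, mul_assoc]
  have upper_term : x 2 * upperMinor d x * (x 0 * minorSeq d x (m + 1))
      = d • (x 2 * x 1 * (middleMinor d x * minorSeq d x (m + 1)))
        + minorProd d x * minorSeq d x (m + 1)
        - d⁻¹ • (x 3 * (lowerMinor d x * x 1 * minorSeq d x (m + 1))) := by
    have h := congrArg (· * minorSeq d x (m + 1)) H.x2_mul_x1_mul_middleMinor
    simp only [add_mul, smul_mul_assoc, mul_assoc] at h ⊢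
    rw [h]
    abel
  calc stepSeq d x (m + 1) * x 0 - d • (stepSeq d x m * (lowerMinor d x * x 1))
      = x 3 * (minorSeq d x (m + 2) * x 0 - d • (minorSeq d x (m + 1) * (lowerMinor d x * x 1)))
        - d • (x 2 * upperMinor d x * (minorSeq d x (m + 1) * x 0
          - d • (minorSeq d x m * (lowerMinor d x * x 1)))) := by
        simp only [stepSeq_eq, mul_sub, sub_mul, smul_mul_assoc, mul_smul_comm, mul_assoc]
        module
    _ = d ^ (m + 1) • (x 3 * (x 0 * minorSeq d x (m + 2))
          - d • (x 2 * x 1 * (middleMinor d x * minorSeq d x (m + 1)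
            - minorProd d x * minorSeq d x m)) - minorProd d x * minorSeq d x (m + 1)) := by
        rw [H.minorSeq_mul_x0_sub, H.minorSeq_mul_x0_sub]
        simp only [mul_sub, mul_smul_comm, lower_term, upper_term]
        match_scalars <;> field_simp <;> ring
    _ = d ^ (m + 1) • minorSeq d x (m + 3) := by
        rw [← minorSeq_add_two, minorSeq_add_two (m + 1), middleMinor]
        simp only [sub_mul, smul_mul_assoc, mul_assoc]

end StraighteningRel

end Straightening

/-! ### The dual PBW basis and triangularity -/

section PBW

open MulOpposite

variable {K R : Type*} [Field K] [Ring R] [Algebra K R]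

theorem mul_pow_eq_smul {k : K} {y z : R} (h : y * z = k • (z * y)) (n : ℕ) :
    y * z ^ n = k ^ n • (z ^ n * y) := by
  induction n with
  | zero => simp
  | succ n ih =>
    rw [pow_succ, ← mul_assoc, ih, smul_mul_assoc, mul_assoc, h, mul_smul_comm, smul_smul,
      ← pow_succ, mul_assoc]

theorem pow_mul_eq_smul {k : K} {y z : R} (h : y * z = k • (z * y)) (n : ℕ) :
    y ^ n * z = k ^ n • (z * y ^ n) := by
  have hop : op z * op y = k • (op y * op z) := congrArg op h
  exact op_injective (mul_pow_eq_smul hop n)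

/-- The dual PBW element `q^{b(a)} u₃^{a₃}u₂^{a₂}u₁^{a₁}u₀^{a₀}` of a quadruple `x` of
generators. -/
def dualPBW (q : K) (x : Fin 4 → R) (a : Idx) : R :=
  q ^ bexp a • (x 3 ^ a.1 * x 2 ^ a.2.1 * x 1 ^ a.2.2.1 * x 0 ^ a.2.2.2)

/-- The index `(a₀, a₁, a₂, a₃)`. -/
def Idx.reverse (a : Idx) : Idx := (a.2.2.2, a.2.2.1, a.2.1, a.1)

variable {q : K} {x : Fin 4 → R}

theorem dualPBW_opRev (a : Idx) : dualPBW q (opRev x) a.reverse = op (dualPBW q x a) := by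
  obtain ⟨a₃, a₂, a₁, a₀⟩ := a
  have hb : bexp (a₀, a₁, a₂, a₃) = bexp (a₃, a₂, a₁, a₀) := by simp only [bexp]; ring
  simp only [dualPBW, Idx.reverse, opRev, hb, mul_assoc, op_smul, op_mul, op_pow]
  rfl

theorem x3_mul_dualPBW (hq : q ≠ 0) (a : Idx) :
    x 3 * dualPBW q x a = q ^ (-(a.1 : ℤ)) • dualPBW q x (a + (1, 0, 0, 0)) := by
  have hb : bexp (a + (1, 0, 0, 0)) = bexp a + a.1 := by
    simp [bexp, Nat.choose_succ_succ' _ 1]; ring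
  simp only [dualPBW, hb]
  simp only [Prod.fst_add, Prod.snd_add, add_zero, mul_smul_comm, pow_succ' (x 3), mul_assoc,
    smul_smul, ← zpow_natCast, ← zpow_add₀ hq]
  congr 2
  push_cast
  ring

theorem x2_mul_dualPBW (H : StraighteningRel (q ^ 2) x) (a : Idx) :
    x 2 * dualPBW q x a
      = q ^ (-(2 * a.1 + a.2.1 : ℤ)) • dualPBW q x (a + (0, 1, 0, 0)) := by
  have hq : q ≠ 0 := H.base_ne_zero
  have hb : bexp (a + (0, 1, 0, 0)) = bexp a + a.2.1 := by
    simp [bexp, Nat.choose_succ_succ' _ 1]; ring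
  simp only [dualPBW, hb]
  simp only [Prod.fst_add, Prod.snd_add, add_zero, mul_smul_comm, pow_succ' (x 2), mul_assoc]
  rw [← mul_assoc (x 2), mul_pow_eq_smul H.x23]
  simp only [mul_assoc, smul_mul_assoc, smul_smul, ← zpow_natCast, ← zpow_neg, ← zpow_mul,
    ← zpow_add₀ hq]
  congr 2
  push_cast
  ring

theorem upperMinor_mul_monomial {d : K} (H : StraighteningRel d x) (a : Idx) :
    upperMinor d x * (x 3 ^ a.1 * x 2 ^ a.2.1 * x 1 ^ a.2.2.1 * x 0 ^ a.2.2.2)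
      = d⁻¹ ^ (a.1 + a.2.1)
          • (x 3 ^ (a.1 + 1) * x 2 ^ a.2.1 * x 1 ^ (a.2.2.1 + 1) * x 0 ^ a.2.2.2)
        - (d⁻¹ ^ a.1 * d)
          • (x 3 ^ a.1 * x 2 ^ (a.2.1 + 2) * x 1 ^ a.2.2.1 * x 0 ^ a.2.2.2) := by
  have pass_left : upperMinor d x * (x 3 ^ a.1 * x 2 ^ a.2.1)
      = d⁻¹ ^ a.1 • (x 3 ^ a.1 * (x 2 ^ a.2.1 * upperMinor d x)) := by
    rw [← mul_assoc, mul_pow_eq_smul H.upperMinor_mul_x3, smul_mul_assoc, mul_assoc,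
      ((show Commute _ _ from H.upperMinor_mul_x2).pow_right _).eq]
  have expand : x 2 ^ a.2.1 * upperMinor d x
      = d⁻¹ ^ a.2.1 • (x 3 * (x 2 ^ a.2.1 * x 1)) - d • x 2 ^ (a.2.1 + 2) := by
    rw [upperMinor, mul_sub, ← mul_assoc, pow_mul_eq_smul H.x23, smul_mul_assoc, mul_assoc,
      mul_smul_comm, ← pow_add]
  rw [mul_assoc _ (x 1 ^ _), ← mul_assoc, pass_left, expand]
  simp only [mul_sub, sub_mul, mul_smul_comm, smul_mul_assoc, smul_sub, smul_smul, ← pow_add,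
    pow_succ (x 3), pow_succ' (x 1), mul_assoc]

theorem upperMinor_mul_dualPBW (H : StraighteningRel (q ^ 2) x) (a : Idx) :
    upperMinor (q ^ 2) x * dualPBW q x a
      = q ^ (-(3 * a.1 + 2 * a.2.1 + a.2.2.1 : ℤ)) • dualPBW q x (a + (1, 0, 1, 0))
        - q ^ (1 - 2 * a.1 - 2 * a.2.1 : ℤ) • dualPBW q x (a + (0, 2, 0, 0)) := by
  have hq : q ≠ 0 := H.base_ne_zero
  have hb : bexp (a + (1, 0, 1, 0)) = bexp a + (a.1 + a.2.2.1) := by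
    simp [bexp, Nat.choose_succ_succ' _ 1]; ring
  have hb' : bexp (a + (0, 2, 0, 0)) = bexp a + (2 * a.2.1 + 1) := by
    simp [bexp, Nat.choose_succ_succ' _ 1]; ring
  simp only [dualPBW, hb, hb']
  rw [mul_smul_comm, upperMinor_mul_monomial H]
  simp only [Prod.fst_add, Prod.snd_add, add_zero, smul_sub, smul_smul, ← zpow_natCast, ← zpow_neg,
    ← zpow_mul, ← zpow_add₀ hq]
  congr 3 <;> push_cast <;> ring

theorem tri_refl (a : Idx) : tri a a := ⟨0, 0, by simp⟩

theorem tri.trans {a b c : Idx} (hab : tri a b) (hbc : tri b c) : tri a c := by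
  obtain ⟨s, r, h₃, h₂, h₁, h₀⟩ := hab
  obtain ⟨s', r', h₃', h₂', h₁', h₀'⟩ := hbc
  exact ⟨s + s', r + r', by push_cast; omega⟩

theorem tri.add_right {a b : Idx} (h : tri a b) (c : Idx) : tri (a + c) (b + c) := by
  obtain ⟨s, r, h₃, h₂, h₁, h₀⟩ := h
  refine ⟨s, r, ?_⟩
  simp only [Prod.fst_add, Prod.snd_add]
  omega

theorem tri.reverse {a b : Idx} (h : tri a b) : tri a.reverse b.reverse := by
  obtain ⟨s, r, h₃, h₂, h₁, h₀⟩ := h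
  refine ⟨r, s, ?_⟩
  simp only [Idx.reverse]
  omega

section Lattice

variable {M M' : Type*} [AddCommGroup M] [Module K M] [AddCommGroup M'] [Module K M']

/-- The additive subgroup `∑_{a ⊴ b} q^m ℤ[q]·E[b]`. -/
def qLattice (q : K) (E : Idx → M) (m : ℤ) (a : Idx) : AddSubgroup M :=
  AddSubgroup.closure {y | ∃ k b, m ≤ k ∧ tri a b ∧ y = q ^ k • E b}

/-- `y` has leading term `E[a]`, all other coefficients lying in `qℤ[q]`. The leading index `a`
is not excluded from the sum, which is harmless for the uniqueness of `B[a]`. -/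
def IsUnitriangular (q : K) (E : Idx → M) (y : M) (a : Idx) : Prop :=
  y - E a ∈ qLattice q E 1 a

variable {E : Idx → M} {E' : Idx → M'} {m k : ℤ} {a a' b : Idx} {y z : M}

theorem zpow_smul_mem_qLattice (hk : m ≤ k) (h : tri a b) : q ^ k • E b ∈ qLattice q E m a :=
  AddSubgroup.subset_closure ⟨k, b, hk, h, rfl⟩

theorem mem_qLattice_zero (h : tri a b) : E b ∈ qLattice q E 0 a := by
  simpa using zpow_smul_mem_qLattice (q := q) (E := E) (le_refl 0) h

theorem qLattice_anti (h : m ≤ k) : qLattice q E k a ≤ qLattice q E m a :=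
  AddSubgroup.closure_mono fun _ ⟨l, b, hl, hb⟩ => ⟨l, b, h.trans hl, hb⟩

theorem zpow_smul_mem_qLattice_add (hq : q ≠ 0) (hy : y ∈ qLattice q E m a) :
    q ^ k • y ∈ qLattice q E (m + k) a := by
  induction hy using AddSubgroup.closure_induction with
  | mem y hy =>
    obtain ⟨l, b, hl, hb, rfl⟩ := hy
    rw [smul_smul, ← zpow_add₀ hq, add_comm]
    exact zpow_smul_mem_qLattice (by lia) hb
  | zero => simp
  | add y z _ _ hy hz => rw [smul_add]; exact add_mem hy hz
  | neg y _ hy => rw [smul_neg]; exact neg_mem hy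

theorem map_mem_qLattice (hq : q ≠ 0) (T : M →ₗ[K] M')
    (hT : ∀ b, tri a b → T (E b) ∈ qLattice q E' 0 a') (hy : y ∈ qLattice q E m a) :
    T y ∈ qLattice q E' m a' := by
  induction hy using AddSubgroup.closure_induction with
  | mem y hy =>
    obtain ⟨l, b, hl, hb, rfl⟩ := hy
    rw [map_smul]
    exact qLattice_anti (by lia) (zpow_smul_mem_qLattice_add hq (hT b hb))
  | zero => simp
  | add y z _ _ hy hz => rw [map_add]; exact add_mem hy hz
  | neg y _ hy => rw [map_neg]; exact neg_mem hy

namespace IsUnitriangular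

theorem of_eq (h : y = E a) : IsUnitriangular q E y a := by
  simp [IsUnitriangular, h]

theorem sub (h : IsUnitriangular q E y a) (hz : z ∈ qLattice q E 1 a) :
    IsUnitriangular q E (y - z) a := by
  have := sub_mem h hz
  rwa [sub_right_comm] at this

theorem mem_qLattice (h : IsUnitriangular q E y b) (hab : tri a b) : y ∈ qLattice q E 0 a := by
  have hE : qLattice q E 1 b ≤ qLattice q E 0 a :=
    AddSubgroup.closure_mono fun _ ⟨l, c, hl, hc, hy⟩ => ⟨l, c, by lia, hab.trans hc, hy⟩
  simpa using add_mem (hE h) (mem_qLattice_zero hab)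

theorem zpow_smul_mem (hq : q ≠ 0) (h : IsUnitriangular q E y b) (hab : tri a b) (hk : 1 ≤ k) :
    q ^ k • y ∈ qLattice q E 1 a :=
  qLattice_anti (by lia) (zpow_smul_mem_qLattice_add hq (h.mem_qLattice hab))

theorem map (hq : q ≠ 0) (h : IsUnitriangular q E y a) (T : M →ₗ[K] M')
    (hT : ∀ b, tri a b → T (E b) ∈ qLattice q E' 0 a') (ha : IsUnitriangular q E' (T (E a)) a') :
    IsUnitriangular q E' (T y) a' := by
  have := add_mem (map_mem_qLattice hq T hT h) ha
  rwa [map_sub, sub_add_sub_cancel] at this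

end IsUnitriangular

end Lattice

namespace IsUnitriangular

variable {a : Idx} {y : R}

theorem op (hq : q ≠ 0) (h : IsUnitriangular q (dualPBW q x) y a) :
    IsUnitriangular q (dualPBW q (opRev x)) (op y) a.reverse :=
  h.map hq (opLinearEquiv K).toLinearMap
    (fun b hb => by
      rw [LinearEquiv.coe_coe, coe_opLinearEquiv, ← dualPBW_opRev]
      exact mem_qLattice_zero hb.reverse)
    (of_eq (dualPBW_opRev a).symm)

theorem unop (hq : q ≠ 0) {y : Rᵐᵒᵖ} (h : IsUnitriangular q (dualPBW q (opRev x)) y a) :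
    IsUnitriangular q (dualPBW q x) y.unop a.reverse :=
  h.map hq (opLinearEquiv K).symm.toLinearMap
    (fun b hb => by
      rw [show b = b.reverse.reverse from rfl, dualPBW_opRev]
      exact mem_qLattice_zero hb.reverse)
    (of_eq (congrArg MulOpposite.unop (dualPBW_opRev a.reverse)))

theorem x3_mul (hq : q ≠ 0) (h : IsUnitriangular q (dualPBW q x) y a) :
    IsUnitriangular q (dualPBW q x) (q ^ (a.1 : ℤ) • (x 3 * y)) (a + (1, 0, 0, 0)) := by
  refine h.map hq (q ^ (a.1 : ℤ) • LinearMap.mulLeft K (x 3)) (fun b hb => ?_) (of_eq ?_) <;>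
  simp only [LinearMap.smul_apply, LinearMap.mulLeft_apply, x3_mul_dualPBW hq, smul_smul,
    ← zpow_add₀ hq]
  · refine zpow_smul_mem_qLattice ?_ (hb.add_right _)
    obtain ⟨s, r, hb⟩ := hb
    omega
  · simp

theorem x2_mul (H : StraighteningRel (q ^ 2) x) (h : IsUnitriangular q (dualPBW q x) y a) :
    IsUnitriangular q (dualPBW q x) (q ^ (2 * a.1 + a.2.1 : ℤ) • (x 2 * y))
      (a + (0, 1, 0, 0)) := by
  have hq : q ≠ 0 := H.base_ne_zero
  refine h.map hq (q ^ (2 * a.1 + a.2.1 : ℤ) • LinearMap.mulLeft K (x 2)) (fun b hb => ?_)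
    (of_eq ?_) <;>
  simp only [LinearMap.smul_apply, LinearMap.mulLeft_apply, x2_mul_dualPBW H, smul_smul,
    ← zpow_add₀ hq]
  · refine zpow_smul_mem_qLattice ?_ (hb.add_right _)
    obtain ⟨s, r, hb⟩ := hb
    omega
  · simp

theorem upperMinor_mul (H : StraighteningRel (q ^ 2) x)
    (h : IsUnitriangular q (dualPBW q x) y a) :
    IsUnitriangular q (dualPBW q x)
      (q ^ (3 * a.1 + 2 * a.2.1 + a.2.2.1 : ℤ) • (upperMinor (q ^ 2) x * y))
      (a + (1, 0, 1, 0)) := by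
  have hq : q ≠ 0 := H.base_ne_zero
  set T := q ^ (3 * a.1 + 2 * a.2.1 + a.2.2.1 : ℤ) • LinearMap.mulLeft K (upperMinor (q ^ 2) x)
  have hTE (b : Idx) (hb : tri a b) :
      IsUnitriangular q (dualPBW q x) (T (dualPBW q x b)) (b + (1, 0, 1, 0)) := by
    obtain ⟨s, r, hb⟩ := hb
    have hweight : (3 * a.1 + 2 * a.2.1 + a.2.2.1 : ℤ) = 3 * b.1 + 2 * b.2.1 + b.2.2.1 := by
      omega
    simp only [T, LinearMap.smul_apply, LinearMap.mulLeft_apply, upperMinor_mul_dualPBW H,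
      smul_sub, smul_smul, ← zpow_add₀ hq, hweight, add_neg_cancel, zpow_zero, one_smul]
    refine (of_eq rfl).sub (zpow_smul_mem_qLattice (by omega) ⟨1, 0, ?_⟩)
    simp only [Prod.fst_add, Prod.snd_add]
    omega
  exact h.map hq T (fun b hb => (hTE b hb).mem_qLattice (hb.add_right _)) (hTE a (tri_refl a))

theorem mul_x0 (hq : q ≠ 0) (h : IsUnitriangular q (dualPBW q x) y a) :
    IsUnitriangular q (dualPBW q x) (q ^ (a.2.2.2 : ℤ) • (y * x 0)) (a + (0, 0, 0, 1)) :=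
  ((h.op hq).x3_mul hq).unop hq

theorem mul_x1 (H : StraighteningRel (q ^ 2) x) (h : IsUnitriangular q (dualPBW q x) y a) :
    IsUnitriangular q (dualPBW q x) (q ^ (2 * a.2.2.2 + a.2.2.1 : ℤ) • (y * x 1))
      (a + (0, 0, 1, 0)) := by
  have hq : q ≠ 0 := H.base_ne_zero
  exact ((h.op hq).x2_mul H.map_opRev).unop hq

theorem mul_lowerMinor (H : StraighteningRel (q ^ 2) x)
    (h : IsUnitriangular q (dualPBW q x) y a) :
    IsUnitriangular q (dualPBW q x)
      (q ^ (3 * a.2.2.2 + 2 * a.2.2.1 + a.2.1 : ℤ) • (y * lowerMinor (q ^ 2) x))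
      (a + (0, 1, 0, 1)) := by
  have hq : q ≠ 0 := H.base_ne_zero
  exact ((h.op hq).upperMinor_mul H.map_opRev).unop hq

end IsUnitriangular

end PBW

/-! ### Uniqueness of bar-invariant unitriangular elements -/

section Lusztig

variable {K M ι : Type*} [Field K] [AddCommGroup M] [Module K M]

variable (K) in
/-- The span of the vectors of a family `E` whose index has level below that of `i`. -/
def lowerSpan (E : ι → M) (level : ι → ℕ) (i : ι) : Submodule K M :=
  Submodule.span K (E '' {j | level j < level i})

variable {bar : K →+* K} {σ : M →ₛₗ[bar] M} {E B : ι → M} {level : ι → ℕ}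

theorem mem_lowerSpan {i j : ι} (h : level j < level i) : E j ∈ lowerSpan K E level i :=
  Submodule.subset_span ⟨j, h, rfl⟩

theorem lowerSpan_mono {i j : ι} (h : level j ≤ level i) :
    lowerSpan K E level j ≤ lowerSpan K E level i :=
  Submodule.span_mono <| Set.image_mono fun _ hk => lt_of_lt_of_le hk h

theorem map_sub_smul_mem_lowerSpan {t : ι → K} (hB : ∀ i, B i - E i ∈ lowerSpan K E level i)
    (hσ : ∀ i, σ (B i) = t i • B i) (i : ι) :
    σ (E i) - t i • E i ∈ lowerSpan K E level i := by
  induction h : level i using Nat.strong_induction_on generalizing i with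
  | _ n ih =>
  subst h
  have stable : lowerSpan K E level i ≤ (lowerSpan K E level i).comap σ := by
    refine Submodule.span_le.mpr ?_
    rintro _ ⟨j, hj, rfl⟩
    have := add_mem (lowerSpan_mono hj.le (ih _ hj j rfl))
      (Submodule.smul_mem _ (t j) (mem_lowerSpan hj))
    rwa [sub_add_cancel] at this
  have := sub_mem (Submodule.smul_mem _ (t i) (hB i)) (stable (hB i))
  rw [map_sub, hσ, smul_sub] at this
  convert this using 1
  abel

theorem exists_mem_support_map_eq_self {t : K} {f : ι →₀ K} (hE : LinearIndependent K E)
    (ht : t ≠ 0) (hf : f ≠ 0)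
    (hσE : ∀ i ∈ f.support, σ (E i) - t • E i ∈ lowerSpan K E level i)
    (hσf : σ (Finsupp.linearCombination K E f) = t • Finsupp.linearCombination K E f) :
    ∃ i ∈ f.support, bar (f i) = f i := by
  obtain ⟨i, hi, hmax⟩ := f.support.exists_max_image level (Finsupp.support_nonempty_iff.mpr hf)
  refine ⟨i, hi, ?_⟩
  -- The coefficient at `E i` is read off modulo the span of the other vectors.
  set π := (Submodule.span K (E '' {i}ᶜ)).mkQ
  have π_of_ne {j : ι} (hj : j ≠ i) : π (E j) = 0 :=
    (Submodule.Quotient.mk_eq_zero _).mpr (Submodule.subset_span ⟨j, hj, rfl⟩)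
  have π_self : π (E i) ≠ 0 := fun h => hE.notMem_span_image (s := {i}ᶜ) (by simp)
    ((Submodule.Quotient.mk_eq_zero _).mp h)
  have π_σ {j : ι} (hj : j ∈ f.support) : π (σ (E j)) = t • π (E j) := by
    have hlower : lowerSpan K E level j ≤ Submodule.span K (E '' {i}ᶜ) :=
      Submodule.span_mono <| Set.image_mono fun k hk hki =>
        (hmax j hj).not_gt (Set.mem_singleton_iff.mp hki ▸ hk)
    rw [← sub_eq_zero, ← map_smul, ← map_sub]
    exact (Submodule.Quotient.mk_eq_zero _).mpr (hlower (hσE j hj))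
  have π_f : π (Finsupp.linearCombination K E f) = f i • π (E i) := by
    rw [Finsupp.linearCombination_apply, Finsupp.sum, map_sum, Finset.sum_eq_single_of_mem i hi,
      map_smul]
    intro j _ hj
    rw [map_smul, π_of_ne hj, smul_zero]
  have π_σf : π (σ (Finsupp.linearCombination K E f)) = bar (f i) • t • π (E i) := by
    rw [Finsupp.linearCombination_apply, Finsupp.sum, map_sum, map_sum,
      Finset.sum_eq_single_of_mem i hi, map_smulₛₗ, map_smul, π_σ hi]
    intro j hj hji
    rw [map_smulₛₗ, map_smul, π_σ hj, π_of_ne hji, smul_zero, smul_zero]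
  rw [hσf, map_smul, π_f, smul_comm] at π_σf
  exact (smul_left_injective K (smul_ne_zero ht π_self) π_σf).symm

end Lusztig

section Uniqueness

open Polynomial

variable {K : Type*} [Field K] {q : K} {bar : K →+* K}

-- Inverting `q` turns an element of `qℤ[q]` into one of `q⁻¹ℤ[q⁻¹]`.
theorem eq_zero_of_map_mul_aeval_eq_self (hq : Transcendental ℤ q) (hbar : bar q = q⁻¹) {p : ℤ[X]}
    (h : bar (q * aeval q p) = q * aeval q p) : p = 0 := by
  by_contra hp
  have hq0 : q ≠ 0 := fun h => hq (h ▸ isAlgebraic_zero)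
  have bar_aeval : bar (aeval q p) = aeval q⁻¹ p := by
    rw [← hbar]
    exact (aeval_algHom_apply bar.toIntAlgHom q p).symm
  have reverse_eq : aeval q p.reverse * q⁻¹ ^ p.natDegree = aeval q⁻¹ p := by
    let _ : Invertible q⁻¹ := invertibleOfNonzero (inv_ne_zero hq0)
    simpa [aeval_def] using eval₂_reverse_mul_pow (algebraMap ℤ K) q⁻¹ p
  have hpoly : X ^ (p.natDegree + 2) * p = p.reverse := by
    refine transcendental_iff_injective.mp hq ?_
    rw [map_mul, bar_aeval, hbar, ← reverse_eq] at h
    rw [map_mul, map_pow, aeval_X, pow_succ, mul_assoc, ← h, inv_pow]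
    field_simp
    ring
  have := congrArg natDegree hpoly
  rw [natDegree_X_pow_mul _ hp] at this
  have := p.reverse_natDegree_le
  lia

variable {M : Type*} [AddCommGroup M] [Module K M] {E : Idx → M} {a b : Idx} {y : M}

/-- The quantity `a₃ + a₀`, which decreases along `⊴`. -/
def Idx.level (a : Idx) : ℕ := a.1 + a.2.2.2

theorem level_lt_of_mem_Sset (h : b ∈ Sset a) : b.level < a.level := by
  obtain ⟨⟨s, r, h₃, h₂, h₁, h₀⟩, hne⟩ := h
  simp only [Idx.level]
  by_contra hle
  exact hne (by ext <;> lia)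

theorem tri.Nnum_eq (h : tri a b) : Nnum b = Nnum a := by
  obtain ⟨s, r, h₃, h₂, h₁, h₀⟩ := h
  simp only [Nnum, h₃, h₂, h₁, h₀]
  ring

theorem exists_linearCombination_of_mem_qLattice (hq : q ≠ 0) (hy : y ∈ qLattice q E 1 a) :
    ∃ f : Idx →₀ K, (∀ b, ∃ p : ℤ[X], f b = q * aeval q p) ∧ (∀ b ∈ f.support, tri a b) ∧
      Finsupp.linearCombination K E f = y := by
  induction hy using AddSubgroup.closure_induction with
  | mem y hy =>
    obtain ⟨k, b, hk, hb, rfl⟩ := hy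
    refine ⟨.single b (q ^ k), fun c => ?_, fun c hc => ?_, by simp⟩
    · obtain rfl | hbc := eq_or_ne b c
      · obtain ⟨n, hn⟩ := Int.eq_ofNat_of_zero_le (sub_nonneg.mpr hk)
        refine ⟨X ^ n, ?_⟩
        rw [Finsupp.single_eq_same, map_pow, aeval_X, ← zpow_natCast, ← hn, zpow_sub_one₀ hq]
        field_simp
      · exact ⟨0, by simp [hbc]⟩
    · rwa [← Finset.mem_singleton.mp (Finsupp.support_single_subset hc)] at hb
  | zero => exact ⟨0, fun _ => ⟨0, by simp⟩, by simp, by simp⟩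
  | add y z _ _ hy hz =>
    obtain ⟨f, hf, hfs, rfl⟩ := hy
    obtain ⟨g, hg, hgs, rfl⟩ := hz
    classical
    refine ⟨f + g, fun b => ?_, fun b hb => ?_, map_add _ _ _⟩
    · obtain ⟨p, hp⟩ := hf b
      obtain ⟨r, hr⟩ := hg b
      exact ⟨p + r, by rw [Finsupp.add_apply, hp, hr, map_add, mul_add]⟩
    · exact (Finset.mem_union.mp (Finsupp.support_add hb)).elim (hfs b) (hgs b)
  | neg y _ hy =>
    obtain ⟨f, hf, hfs, rfl⟩ := hy
    refine ⟨-f, fun b => ?_, fun b hb => hfs b (by simpa using hb), map_neg _ _⟩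
    obtain ⟨p, hp⟩ := hf b
    exact ⟨-p, by rw [Finsupp.neg_apply, hp, map_neg, mul_neg]⟩

theorem eq_zero_of_mem_qLattice {σ : M →ₛₗ[bar] M} (hq : Transcendental ℤ q)
    (hbar : bar q = q⁻¹) (hE : LinearIndependent K E)
    (hσE : ∀ b, σ (E b) - q ^ (-Nnum b) • E b ∈ lowerSpan K E Idx.level b)
    (hy : y ∈ qLattice q E 1 a) (hσy : σ y = q ^ (-Nnum a) • y) : y = 0 := by
  have hq0 : q ≠ 0 := fun h => hq (h ▸ isAlgebraic_zero)
  obtain ⟨f, hf, hfa, rfl⟩ := exists_linearCombination_of_mem_qLattice hq0 hy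
  by_contra hne
  have hf0 : f ≠ 0 := fun h => hne (by rw [h, map_zero])
  obtain ⟨b, hb, hfix⟩ := exists_mem_support_map_eq_self hE (zpow_ne_zero _ hq0) hf0
    (fun b hb => (hfa b hb).Nnum_eq ▸ hσE b) hσy
  obtain ⟨p, hp⟩ := hf b
  rw [hp] at hfix
  rw [Finsupp.mem_support_iff, hp, eq_zero_of_map_mul_aeval_eq_self hq hbar hfix] at hb
  simp at hb

end Uniqueness

/-! ### The twisted anti-automorphism -/

section Twisted

variable {K R : Type*} [Field K] [Ring R] [Algebra K R] {bar : K →+* K}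

theorem map_lucasU_of_map_eq_smul {σ : R →ₛₗ[bar] R} {P Q : R} {c : K} (hone : σ 1 = 1)
    (hmul : ∀ y z, σ (y * z) = σ z * σ y) (hc : c ≠ 0) (hPQ : Commute P Q) (hP : σ P = c • P)
    (hQ : σ Q = c ^ 2 • Q) (n : ℕ) : σ (lucasU P Q n) = c ^ (n - 1 : ℤ) • lucasU P Q n := by
  induction n using Nat.twoStepInduction with
  | zero => simp [lucasU]
  | one => simp [lucasU, hone]
  | more n ih ih' =>
    conv_rhs => rw [lucasU_add_two_right hPQ]
    rw [lucasU_add_two, map_sub, hmul, hmul, ih, ih', hP, hQ]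
    simp only [mul_smul_comm, smul_mul_assoc, smul_sub, smul_smul, ← zpow_natCast,
      ← zpow_one_add₀ hc, ← zpow_add₀ hc]
    congr 3 <;> push_cast <;> ring

/-- `σ` is an anti-homomorphism that is semilinear over `q ↦ q⁻¹` and sends `uᵢ` to `q^{2i}uᵢ`. -/
structure IsTwistedAntiHom (q : K) (σ : R →ₛₗ[bar] R) (x : Fin 4 → R) : Prop where
  bar_q : bar q = q⁻¹
  map_one : σ 1 = 1
  map_mul : ∀ y z, σ (y * z) = σ z * σ y
  map_gen : ∀ i : Fin 4, σ (x i) = q ^ (2 * (i : ℕ)) • x i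

namespace IsTwistedAntiHom

variable {q : K} {σ : R →ₛₗ[bar] R} {x : Fin 4 → R}

theorem bar_zpow (hσ : IsTwistedAntiHom q σ x) (k : ℤ) : bar (q ^ k) = q ^ (-k) := by
  rw [map_zpow₀, hσ.bar_q, inv_zpow']

theorem gen_mul_gen (hσ : IsTwistedAntiHom q σ x) (hq : q ≠ 0) {i j : Fin 4} {n : ℕ}
    (h : σ (x j * x i) = q ^ n • (x j * x i)) (hn : 2 * (i : ℕ) + 2 * (j : ℕ) = n + 2) :
    x i * x j = (q ^ 2)⁻¹ • (x j * x i) := by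
  rw [hσ.map_mul, hσ.map_gen, hσ.map_gen, smul_mul_smul_comm, ← pow_add, hn, pow_add,
    mul_smul] at h
  rw [eq_inv_smul_iff₀ (pow_ne_zero 2 hq)]
  exact smul_right_injective R (pow_ne_zero n hq) h

theorem map_middleMinor (hσ : IsTwistedAntiHom q σ x) (H : StraighteningRel (q ^ 2) x) :
    σ (middleMinor (q ^ 2) x) = q ^ 4 • middleMinor (q ^ 2) x := by
  have hq : q ≠ 0 := H.base_ne_zero
  simp only [middleMinor, map_sub, map_smulₛₗ, hσ.map_mul, hσ.map_gen, map_pow, hσ.bar_q,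
    smul_mul_smul_comm, H.x03, H.x12]
  match_scalars <;> simp <;> field_simp
  ring

theorem map_upperMinor (hσ : IsTwistedAntiHom q σ x) (H : StraighteningRel (q ^ 2) x) :
    σ (upperMinor (q ^ 2) x) = q ^ 6 • upperMinor (q ^ 2) x := by
  have hq : q ≠ 0 := H.base_ne_zero
  simp only [upperMinor, pow_two (x 2), map_sub, map_smulₛₗ, hσ.map_mul, hσ.map_gen, map_pow,
    hσ.bar_q, smul_mul_smul_comm, H.x13]
  match_scalars <;> simp <;> field_simp
  ring

theorem map_lowerMinor (hσ : IsTwistedAntiHom q σ x) (H : StraighteningRel (q ^ 2) x) :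
    σ (lowerMinor (q ^ 2) x) = q ^ 2 • lowerMinor (q ^ 2) x := by
  have hq : q ≠ 0 := H.base_ne_zero
  simp only [lowerMinor, pow_two (x 1), map_sub, map_smulₛₗ, hσ.map_mul, hσ.map_gen, map_pow,
    hσ.bar_q, smul_mul_smul_comm, H.x02]
  match_scalars <;> simp <;> field_simp
  ring

theorem map_minorProd (hσ : IsTwistedAntiHom q σ x) (H : StraighteningRel (q ^ 2) x) :
    σ (minorProd (q ^ 2) x) = (q ^ 4) ^ 2 • minorProd (q ^ 2) x := by
  have hq : q ≠ 0 := H.base_ne_zero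
  rw [minorProd, map_smulₛₗ, hσ.map_mul, hσ.map_upperMinor H, hσ.map_lowerMinor H,
    smul_mul_smul_comm, H.upperMinor_mul_lowerMinor, map_pow, hσ.bar_q]
  simp only [smul_smul]
  congr 1
  field_simp

theorem map_minorSeq (hσ : IsTwistedAntiHom q σ x) (H : StraighteningRel (q ^ 2) x) (n : ℕ) :
    σ (minorSeq (q ^ 2) x n) = q ^ (4 * (n : ℤ) - 4) • minorSeq (q ^ 2) x n := by
  have hq : q ≠ 0 := H.base_ne_zero
  have h := map_lucasU_of_map_eq_smul hσ.map_one hσ.map_mul (pow_ne_zero 4 hq)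
    H.commute_middleMinor_minorProd (hσ.map_middleMinor H) (hσ.map_minorProd H) n
  rw [minorSeq, h, ← zpow_natCast, ← zpow_mul]
  congr 2
  push_cast
  ring

theorem map_upperMinor_mul_minorSeq (hσ : IsTwistedAntiHom q σ x) (H : StraighteningRel (q ^ 2) x)
    (k : ℕ) :
    σ (upperMinor (q ^ 2) x * minorSeq (q ^ 2) x (k + 1))
      = q ^ (2 * (k : ℤ) + 6) • (upperMinor (q ^ 2) x * minorSeq (q ^ 2) x (k + 1)) := by
  have hq : q ≠ 0 := H.base_ne_zero
  rw [hσ.map_mul, hσ.map_minorSeq H, hσ.map_upperMinor H, H.upperMinor_mul_minorSeq_succ]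
  simp only [smul_mul_smul_comm, smul_smul, ← zpow_natCast, ← zpow_mul, ← zpow_add₀ hq]
  congr 2
  push_cast
  ring

theorem map_stepSeq (hσ : IsTwistedAntiHom q σ x) (H : StraighteningRel (q ^ 2) x) (m : ℕ) :
    σ (stepSeq (q ^ 2) x m) = q ^ (2 * (m : ℤ) + 6) • stepSeq (q ^ 2) x m := by
  have hq : q ≠ 0 := H.base_ne_zero
  have map_x3 : σ (x 3) = q ^ 6 • x 3 := hσ.map_gen 3
  have map_x2 : σ (x 2) = q ^ 4 • x 2 := hσ.map_gen 2
  conv_rhs => rw [H.stepSeq_eq_smul, ← H.upperMinor_mul_x2]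
  rw [stepSeq_eq, map_sub, map_smulₛₗ, hσ.map_mul, hσ.map_mul, hσ.map_mul, hσ.map_minorSeq H,
    hσ.map_minorSeq H, hσ.map_upperMinor H, map_x3, map_x2, map_pow, hσ.bar_q, inv_pow]
  simp only [smul_mul_smul_comm, smul_smul, smul_sub, ← zpow_natCast, ← zpow_neg, ← zpow_mul,
    ← zpow_add₀ hq]
  congr 3 <;> push_cast <;> ring

end IsTwistedAntiHom

end Twisted

/-! ### Closed forms of the dual canonical basis elements -/

section Candidates

variable {K R : Type*} [Field K] [Ring R] [Algebra K R]

/-- The closed form of `B[n,0,0,n]`. -/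
def diagElem (q : K) (x : Fin 4 → R) (n : ℕ) : R :=
  q ^ (2 * n * (n - 1) : ℤ) • minorSeq (q ^ 2) x (n + 1)

/-- The closed form of `B[m+1,0,0,m]`. -/
def stepElem (q : K) (x : Fin 4 → R) (m : ℕ) : R :=
  q ^ (m * (2 * m - 1) : ℤ) • stepSeq (q ^ 2) x m

/-- The closed form of `B[k+1,0,1,k]`. -/
def minorElem (q : K) (x : Fin 4 → R) (k : ℕ) : R :=
  q ^ (k * (2 * k + 1) : ℤ) • (upperMinor (q ^ 2) x * minorSeq (q ^ 2) x (k + 1))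

variable {q : K} {x : Fin 4 → R}

theorem diagElem_zero : diagElem q x 0 = 1 := by simp [diagElem, minorSeq, lucasU]

theorem diagElem_one : diagElem q x 1 = middleMinor (q ^ 2) x := by
  simp [diagElem, minorSeq, lucasU]

theorem stepElem_zero : stepElem q x 0 = x 3 := by simp [stepElem, stepSeq, lucasComb_zero]

theorem minorElem_eq_upperMinor_mul (hq : q ≠ 0) (k : ℕ) :
    minorElem q x k = q ^ (3 * k : ℤ) • (upperMinor (q ^ 2) x * diagElem q x k) := by
  rw [minorElem, diagElem, mul_smul_comm, smul_smul, ← zpow_add₀ hq]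
  congr 2
  ring

theorem stepElem_succ_eq_left (hq : q ≠ 0) (k : ℕ) :
    stepElem q x (k + 1) = q ^ (k + 1 : ℤ) • (x 3 * diagElem q x (k + 1))
      - q ^ (2 * k + 3 : ℤ) • (x 2 * minorElem q x k) := by
  simp only [stepElem, stepSeq_eq, diagElem, minorElem, smul_sub, mul_smul_comm, smul_smul,
    ← zpow_natCast, ← zpow_add₀ hq, mul_assoc]
  congr 3 <;> push_cast <;> ring

namespace StraighteningRel

theorem stepElem_succ_eq_right (H : StraighteningRel (q ^ 2) x) (k : ℕ) :
    stepElem q x (k + 1) = q ^ (3 * k + 3 : ℤ) • (diagElem q x (k + 1) * x 3)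
      - q ^ (2 * k + 1 : ℤ) • (minorElem q x k * x 2) := by
  have hq : q ≠ 0 := H.base_ne_zero
  rw [stepElem, diagElem, minorElem, H.stepSeq_eq_smul, ← H.upperMinor_mul_x2,
    H.upperMinor_mul_minorSeq_succ]
  simp only [smul_mul_assoc, mul_assoc, smul_sub, smul_smul, ← zpow_natCast, ← zpow_neg,
    ← zpow_mul, ← zpow_add₀ hq]
  congr 3 <;> push_cast <;> ring

theorem diagElem_add_two (H : StraighteningRel (q ^ 2) x) (m : ℕ) :
    diagElem q x (m + 2) = q ^ (m + 1 : ℤ) • (stepElem q x (m + 1) * x 0)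
      - q ^ (2 * m + 4 : ℤ)
        • ((q ^ (3 * m : ℤ) • (stepElem q x m * lowerMinor (q ^ 2) x)) * x 1) := by
  have hq : q ≠ 0 := H.base_ne_zero
  have h : diagElem q x (m + 2)
      = q ^ (2 * (m + 1) ^ 2 : ℤ) • ((q ^ 2) ^ (m + 1) • minorSeq (q ^ 2) x (m + 3)) := by
    simp only [diagElem, smul_smul, ← zpow_natCast, ← zpow_mul, ← zpow_add₀ hq]
    congr 2
    push_cast
    ring
  rw [h, ← H.stepSeq_mul_x0_sub, stepElem, stepElem]
  simp only [smul_mul_assoc, mul_assoc, smul_sub, smul_smul, ← zpow_natCast,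
    ← zpow_add₀ hq]
  congr 3 <;> push_cast <;> ring

theorem isUnitriangular_minorElem (H : StraighteningRel (q ^ 2) x) {k : ℕ}
    (h : IsUnitriangular q (dualPBW q x) (diagElem q x k) (k, 0, 0, k)) :
    IsUnitriangular q (dualPBW q x) (minorElem q x k) (k + 1, 0, 1, k) := by
  have hq : q ≠ 0 := H.base_ne_zero
  have := h.upperMinor_mul H
  simp only [Nat.cast_zero, mul_zero, add_zero] at this
  rwa [minorElem_eq_upperMinor_mul hq]

theorem isUnitriangular_stepElem_succ (H : StraighteningRel (q ^ 2) x) {k : ℕ}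
    (h : IsUnitriangular q (dualPBW q x) (diagElem q x k) (k, 0, 0, k))
    (h' : IsUnitriangular q (dualPBW q x) (diagElem q x (k + 1)) (k + 1, 0, 0, k + 1)) :
    IsUnitriangular q (dualPBW q x) (stepElem q x (k + 1)) (k + 2, 0, 0, k + 1) := by
  have hq : q ≠ 0 := H.base_ne_zero
  have hx₂ := ((H.isUnitriangular_minorElem h).x2_mul H).zpow_smul_mem (k := 1)
    (a := (k + 2, 0, 0, k + 1)) hq ⟨1, 1, by simp; lia⟩ le_rfl
  rw [smul_smul, ← zpow_add₀ hq] at hx₂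
  rw [stepElem_succ_eq_left hq]
  have hexp : (2 * k + 3 : ℤ) = 1 + (2 * (k + 1 : ℕ) + (0 : ℕ)) := by push_cast; ring
  rw [hexp]
  exact (h'.x3_mul hq).sub hx₂

theorem isUnitriangular_diagElem_add_two (H : StraighteningRel (q ^ 2) x) {m : ℕ}
    (h : IsUnitriangular q (dualPBW q x) (stepElem q x m) (m + 1, 0, 0, m))
    (h' : IsUnitriangular q (dualPBW q x) (stepElem q x (m + 1)) (m + 2, 0, 0, m + 1)) :
    IsUnitriangular q (dualPBW q x) (diagElem q x (m + 2)) (m + 2, 0, 0, m + 2) := by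
  have hq : q ≠ 0 := H.base_ne_zero
  have hx₁ := ((h.mul_lowerMinor H).mul_x1 H).zpow_smul_mem (k := 2)
    (a := (m + 2, 0, 0, m + 2)) hq ⟨1, 1, by simp; lia⟩ one_le_two
  rw [smul_smul, ← zpow_add₀ hq] at hx₁
  rw [H.diagElem_add_two]
  have hexp : (2 * m + 4 : ℤ) = 2 + (2 * (m + 1 : ℕ) + (0 : ℕ)) := by push_cast; ring
  have hexp' : (3 * m : ℤ) = 3 * m + 2 * (0 : ℕ) + (0 : ℕ) := by simp
  rw [hexp, hexp']
  exact (h'.mul_x0 hq).sub hx₁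

theorem isUnitriangular_diagElem_stepElem (H : StraighteningRel (q ^ 2) x) (n : ℕ) :
    IsUnitriangular q (dualPBW q x) (diagElem q x n) (n, 0, 0, n) ∧
      IsUnitriangular q (dualPBW q x) (stepElem q x n) (n + 1, 0, 0, n) := by
  have diag_zero : IsUnitriangular q (dualPBW q x) (diagElem q x 0) (0, 0, 0, 0) :=
    .of_eq (by simp [diagElem_zero, dualPBW, bexp])
  have step_zero : IsUnitriangular q (dualPBW q x) (stepElem q x 0) (1, 0, 0, 0) :=
    .of_eq (by simp [stepElem_zero, dualPBW, bexp])
  have diag_one : IsUnitriangular q (dualPBW q x) (diagElem q x 1) (1, 0, 0, 1) := by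
    have hlower : q ^ (2 : ℤ) • dualPBW q x (0, 1, 1, 0)
        ∈ qLattice q (dualPBW q x) 1 (1, 0, 0, 1) :=
      zpow_smul_mem_qLattice one_le_two ⟨1, 1, by simp⟩
    have := (IsUnitriangular.of_eq (rfl : dualPBW q x (1, 0, 0, 1) = _)).sub hlower
    rw [diagElem_one, middleMinor]
    simpa [dualPBW, bexp] using this
  induction n using Nat.twoStepInduction with
  | zero => exact ⟨diag_zero, step_zero⟩
  | one => exact ⟨diag_one, H.isUnitriangular_stepElem_succ diag_zero diag_one⟩
  | more n ih ih' =>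
    have diag := H.isUnitriangular_diagElem_add_two ih.2 ih'.2
    exact ⟨diag, H.isUnitriangular_stepElem_succ ih'.1 diag⟩

end StraighteningRel

namespace IsTwistedAntiHom

variable {bar : K →+* K} {σ : R →ₛₗ[bar] R}

theorem map_diagElem (hσ : IsTwistedAntiHom q σ x) (H : StraighteningRel (q ^ 2) x) (n : ℕ) :
    σ (diagElem q x n) = q ^ (-Nnum (n, 0, 0, n)) • diagElem q x n := by
  have hq : q ≠ 0 := H.base_ne_zero
  rw [diagElem, map_smulₛₗ, hσ.map_minorSeq H, hσ.bar_zpow, smul_smul, smul_smul,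
    ← zpow_add₀ hq, ← zpow_add₀ hq]
  congr 2
  simp only [Nnum]
  push_cast
  ring

theorem map_stepElem (hσ : IsTwistedAntiHom q σ x) (H : StraighteningRel (q ^ 2) x) (m : ℕ) :
    σ (stepElem q x m) = q ^ (-Nnum (m + 1, 0, 0, m)) • stepElem q x m := by
  have hq : q ≠ 0 := H.base_ne_zero
  rw [stepElem, map_smulₛₗ, hσ.map_stepSeq H, hσ.bar_zpow, smul_smul, smul_smul,
    ← zpow_add₀ hq, ← zpow_add₀ hq]
  congr 2
  simp only [Nnum]
  push_cast
  ring

theorem map_minorElem (hσ : IsTwistedAntiHom q σ x) (H : StraighteningRel (q ^ 2) x) (k : ℕ) :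
    σ (minorElem q x k) = q ^ (-Nnum (k + 1, 0, 1, k)) • minorElem q x k := by
  have hq : q ≠ 0 := H.base_ne_zero
  rw [minorElem, map_smulₛₗ, hσ.map_upperMinor_mul_minorSeq H, hσ.bar_zpow, smul_smul, smul_smul,
    ← zpow_add₀ hq, ← zpow_add₀ hq]
  congr 2
  simp only [Nnum]
  push_cast
  ring

end IsTwistedAntiHom

end Candidates

/-! ### Straightening relations from a derivation -/

section Derivation

variable {K R R' : Type*} [Field K] [Ring R] [Algebra K R] [Ring R'] [Algebra K R'] {κ d : K}
  {x : Fin 4 → R}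

namespace StraighteningRel

theorem of_map {f : R →ₐ[K] R'} (hf : Function.Injective f) (H : StraighteningRel d (f ∘ x)) :
    StraighteningRel d x where
  ne_zero := H.ne_zero
  x01 := hf (by simpa using H.x01)
  x12 := hf (by simpa using H.x12)
  x23 := hf (by simpa using H.x23)
  x02 := hf (by simpa using H.x02)
  x13 := hf (by simpa using H.x13)
  x03 := hf (by simpa using H.x03)

-- Applying `D` to the relations between neighbours produces the remaining ones.
theorem of_derivation {D : R →ₗ[K] R} (leibniz : ∀ y z, D (y * z) = D y * z + y * D z)
    (hκ : κ ≠ 0) (hD : ∀ i : Fin 3, D (x i.castSucc) = κ • x i.succ) (hd : d ≠ 0)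
    (h : ∀ i : Fin 3, x i.castSucc * x i.succ = d⁻¹ • (x i.succ * x i.castSucc)) :
    StraighteningRel d x := by
  have D0 : D (x 0) = κ • x 1 := hD 0
  have D1 : D (x 1) = κ • x 2 := hD 1
  have D2 : D (x 2) = κ • x 3 := hD 2
  have h01 : x 0 * x 1 = d⁻¹ • (x 1 * x 0) := h 0
  have h12 : x 1 * x 2 = d⁻¹ • (x 2 * x 1) := h 1
  have D_h01 : x 1 * x 1 + x 0 * x 2 = d⁻¹ • (x 2 * x 0 + x 1 * x 1) := by
    apply smul_right_injective R hκ
    simpa [leibniz, D0, D1, smul_comm κ] using congrArg D h01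
  have D_h12 : x 2 * x 2 + x 1 * x 3 = d⁻¹ • (x 3 * x 1 + x 2 * x 2) := by
    apply smul_right_injective R hκ
    simpa [leibniz, D1, D2, smul_comm κ] using congrArg D h12
  have h02 : x 0 * x 2 = d⁻¹ • (x 2 * x 0) + (d⁻¹ - 1) • (x 1 * x 1) := by
    rw [eq_sub_of_add_eq' D_h01]
    module
  have D_h02 : x 1 * x 2 + x 0 * x 3
      = d⁻¹ • (x 3 * x 0 + x 2 * x 1) + (d⁻¹ - 1) • (x 2 * x 1 + x 1 * x 2) := by
    apply smul_right_injective R hκ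
    simpa [leibniz, D0, D1, D2, smul_comm κ] using congrArg D h02
  refine ⟨hd, h01, h12, h 2, h02, ?_, ?_⟩
  · rw [eq_sub_of_add_eq' D_h12]
    module
  · rw [eq_sub_of_add_eq' D_h02, h12]
    module

end StraighteningRel

end Derivation

/-! ### The dual canonical basis -/

section DualCanonical

variable {K M : Type*} [Field K] [AddCommGroup M] [Module K M] {q : K} {bar : K →+* K}

/-- `B` is the dual canonical basis attached to the linearly independent family `E` and the
semilinear map `σ`. The lattice `∑ qℤ[q]·E[b]` over `b ∈ S(a)` is generated additively by the
vectors `q^k E[b]` with `k ≥ 1`. -/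
structure IsDualCanonical (q : K) (σ : M →ₛₗ[bar] M) (E B : Idx → M) : Prop where
  linearIndependent : LinearIndependent K E
  sub_mem_closure : ∀ a,
    B a - E a ∈ AddSubgroup.closure {y | ∃ k : ℤ, ∃ b, 1 ≤ k ∧ b ∈ Sset a ∧ y = q ^ k • E b}
  map_eq : ∀ a, σ (B a) = q ^ (-Nnum a) • B a

theorem Sset_eq_empty {a : Idx}
    (h : a.1 + a.2.1 = 0 ∨ a.1 + a.2.2.2 = 0 ∨ a.2.2.1 + a.2.2.2 = 0) : Sset a = ∅ := by
  refine Set.eq_empty_of_forall_notMem fun b ⟨⟨s, r, hb⟩, hne⟩ => hne ?_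
  ext <;> lia

namespace IsDualCanonical

variable {σ : M →ₛₗ[bar] M} {E B : Idx → M} {a : Idx} {y : M}

theorem eq_of_Sset_eq_empty (hB : IsDualCanonical q σ E B) (ha : Sset a = ∅) : B a = E a := by
  have := hB.sub_mem_closure a
  simpa [ha, sub_eq_zero] using this

theorem isUnitriangular (hB : IsDualCanonical q σ E B) (a : Idx) :
    IsUnitriangular q E (B a) a :=
  AddSubgroup.closure_mono (by rintro _ ⟨k, b, hk, hb, hy⟩; exact ⟨k, b, hk, hb.1, hy⟩)
    (hB.sub_mem_closure a)

theorem sub_mem_lowerSpan (hB : IsDualCanonical q σ E B) (a : Idx) :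
    B a - E a ∈ lowerSpan K E Idx.level a := by
  refine (AddSubgroup.closure_le (lowerSpan K E Idx.level a).toAddSubgroup).mpr ?_
    (hB.sub_mem_closure a)
  rintro _ ⟨k, b, -, hb, rfl⟩
  exact Submodule.smul_mem _ _ (mem_lowerSpan (level_lt_of_mem_Sset hb))

theorem eq_of_isUnitriangular (hB : IsDualCanonical q σ E B) (hq : Transcendental ℤ q)
    (hbar : bar q = q⁻¹) (hy : IsUnitriangular q E y a) (hσy : σ y = q ^ (-Nnum a) • y) :
    B a = y := by
  have hσE := map_sub_smul_mem_lowerSpan hB.sub_mem_lowerSpan hB.map_eq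
  have hmem : B a - y ∈ qLattice q E 1 a := by
    simpa using sub_mem (hB.isUnitriangular a) hy
  have hσ : σ (B a - y) = q ^ (-Nnum a) • (B a - y) := by
    rw [map_sub, hB.map_eq, hσy, smul_sub]
  exact sub_eq_zero.mp (eq_zero_of_mem_qLattice hq hbar hB.linearIndependent hσE hmem hσ)

end IsDualCanonical

end DualCanonical

section ClosedForms

variable {K R : Type*} [Field K] [Ring R] [Algebra K R] {q : K} {bar : K →+* K}
  {σ : R →ₛₗ[bar] R} {x : Fin 4 → R} {B : Idx → R}

namespace IsDualCanonical

theorem eq_one (hB : IsDualCanonical q σ (dualPBW q x) B) : B (0, 0, 0, 0) = 1 := by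
  rw [hB.eq_of_Sset_eq_empty (Sset_eq_empty (by simp))]
  simp [dualPBW, bexp]

theorem eq_x3 (hB : IsDualCanonical q σ (dualPBW q x) B) : B (1, 0, 0, 0) = x 3 := by
  rw [hB.eq_of_Sset_eq_empty (Sset_eq_empty (by simp))]
  simp [dualPBW, bexp]

theorem map_dualPBW (hB : IsDualCanonical q σ (dualPBW q x) B) {a : Idx}
    (ha : a.1 + a.2.1 = 0 ∨ a.1 + a.2.2.2 = 0 ∨ a.2.2.1 + a.2.2.2 = 0) :
    σ (dualPBW q x a) = q ^ (-Nnum a) • dualPBW q x a := by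
  rw [← hB.eq_of_Sset_eq_empty (Sset_eq_empty ha), hB.map_eq]

theorem gen_mul_gen_succ (hB : IsDualCanonical q σ (dualPBW q x) B)
    (hσ : IsTwistedAntiHom q σ x) (hq : q ≠ 0) (i : Fin 3) :
    x i.castSucc * x i.succ = (q ^ 2)⁻¹ • (x i.succ * x i.castSucc) := by
  fin_cases i
  · have := hB.map_dualPBW (a := (0, 0, 1, 1)) (by simp)
    exact hσ.gen_mul_gen hq (n := 0) (by simpa [dualPBW, bexp, Nnum] using this) rfl
  · have := hB.map_dualPBW (a := (0, 1, 1, 0)) (by simp)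
    exact hσ.gen_mul_gen hq (n := 4) (by simpa [dualPBW, bexp, Nnum] using this) rfl
  · have := hB.map_dualPBW (a := (1, 1, 0, 0)) (by simp)
    exact hσ.gen_mul_gen hq (n := 8) (by simpa [dualPBW, bexp, Nnum] using this) rfl

theorem eq_diagElem (hB : IsDualCanonical q σ (dualPBW q x) B) (hq : Transcendental ℤ q)
    (hσ : IsTwistedAntiHom q σ x) (H : StraighteningRel (q ^ 2) x) (n : ℕ) :
    B (n, 0, 0, n) = diagElem q x n :=
  hB.eq_of_isUnitriangular hq hσ.bar_q (H.isUnitriangular_diagElem_stepElem n).1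
    (hσ.map_diagElem H n)

theorem eq_stepElem (hB : IsDualCanonical q σ (dualPBW q x) B) (hq : Transcendental ℤ q)
    (hσ : IsTwistedAntiHom q σ x) (H : StraighteningRel (q ^ 2) x) (m : ℕ) :
    B (m + 1, 0, 0, m) = stepElem q x m :=
  hB.eq_of_isUnitriangular hq hσ.bar_q (H.isUnitriangular_diagElem_stepElem m).2
    (hσ.map_stepElem H m)

theorem eq_minorElem (hB : IsDualCanonical q σ (dualPBW q x) B) (hq : Transcendental ℤ q)
    (hσ : IsTwistedAntiHom q σ x) (H : StraighteningRel (q ^ 2) x) (k : ℕ) :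
    B (k + 1, 0, 1, k) = minorElem q x k :=
  hB.eq_of_isUnitriangular hq hσ.bar_q
    (H.isUnitriangular_minorElem (H.isUnitriangular_diagElem_stepElem k).1)
    (hσ.map_minorElem H k)

theorem eq_mul_left_sub (hB : IsDualCanonical q σ (dualPBW q x) B) (hq : Transcendental ℤ q)
    (hσ : IsTwistedAntiHom q σ x) (H : StraighteningRel (q ^ 2) x) (k : ℕ) :
    B (k + 2, 0, 0, k + 1) = q ^ (k + 1 : ℤ) • (x 3 * B (k + 1, 0, 0, k + 1))
      - q ^ (2 * k + 3 : ℤ) • (x 2 * B (k + 1, 0, 1, k)) := by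
  have hq0 : q ≠ 0 := H.base_ne_zero
  rw [hB.eq_stepElem hq hσ H, hB.eq_diagElem hq hσ H, hB.eq_minorElem hq hσ H,
    stepElem_succ_eq_left hq0]

theorem eq_mul_right_sub (hB : IsDualCanonical q σ (dualPBW q x) B) (hq : Transcendental ℤ q)
    (hσ : IsTwistedAntiHom q σ x) (H : StraighteningRel (q ^ 2) x) (k : ℕ) :
    B (k + 2, 0, 0, k + 1) = q ^ (3 * k + 3 : ℤ) • (B (k + 1, 0, 0, k + 1) * x 3)
      - q ^ (2 * k + 1 : ℤ) • (B (k + 1, 0, 1, k) * x 2) := by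
  rw [hB.eq_stepElem hq hσ H, hB.eq_diagElem hq hσ H, hB.eq_minorElem hq hσ H,
    H.stepElem_succ_eq_right]

end IsDualCanonical

end ClosedForms

/-! ### The subalgebra `S` -/

section Quantum

section General

variable {K R : Type*} [Field K] [Ring R] [Algebra K R]

theorem one_sub_inv_sq_ne_zero {q : K} (hq : Transcendental ℤ q) : 1 - q⁻¹ ^ 2 ≠ 0 := by
  intro h
  rw [inv_pow, sub_eq_zero, eq_comm, inv_eq_one] at h
  exact hq (IsIntegral.isAlgebraic (.of_pow two_pos (h ▸ isIntegral_one)))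

theorem mulLeft_sub_mulRight_mul (A y z : R) :
    (LinearMap.mulLeft K A - LinearMap.mulRight K A) (y * z)
      = (LinearMap.mulLeft K A - LinearMap.mulRight K A) y * z
        + y * (LinearMap.mulLeft K A - LinearMap.mulRight K A) z := by
  simp only [LinearMap.sub_apply, LinearMap.mulLeft_apply, LinearMap.mulRight_apply]
  noncomm_ring

theorem commutator_inv_pow_smul {c : K} (hc : c ≠ 0) (A v : R) (n : ℕ) :
    A * (c⁻¹ ^ n • v) - (c⁻¹ ^ n • v) * A = c ^ 2 • (c⁻¹ ^ (n + 2) • (A * v - v * A)) := by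
  rw [mul_smul_comm, smul_mul_assoc, ← smul_sub, smul_smul, pow_add, mul_left_comm, inv_pow c 2,
    mul_inv_cancel₀ (pow_ne_zero 2 hc), mul_one]

end General

open Polynomial

-- `RatFunc` carries an `Algebra ℤ` instance that is not defeq to the one of a general ring.
theorem transcendental_int_ratFunc_X (k : Type*) [Field k] [CharZero k] :
    @Transcendental ℤ (RatFunc k) _ _ (Ring.toIntAlgebra _) RatFunc.X := by
  rw [Subsingleton.elim (Ring.toIntAlgebra (RatFunc k)) (RatFunc.instAlgebraOfPolynomial k ℤ)]
  exact (RatFunc.transcendental_X (K := k)).restrictScalars (RingHom.injective_int _)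

theorem transcendental_int_qq : @Transcendental ℤ F _ _ (Ring.toIntAlgebra F) qq :=
  transcendental_int_ratFunc_X ℚ

theorem qq_ne_zero : qq ≠ 0 := RatFunc.X_ne_zero

theorem one_sub_qq_inv_sq_ne_zero : 1 - qq⁻¹ ^ 2 ≠ 0 :=
  one_sub_inv_sq_ne_zero transcendental_int_qq

/-- The generators `u₀, u₁, u₂, u₃` of `S`, indexed by their subscript. -/
def us : Fin 4 → Sgen := ![us0, us1, us2, us3]

theorem linearIndependent_dualPBW_us (hPBW : LinearIndependent F mon) :
    LinearIndependent F (dualPBW qq us) :=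
  hPBW.units_smul fun a => Units.mk0 (qq ^ bexp a) (pow_ne_zero _ qq_ne_zero)

theorem commutator_us (i : Fin 3) :
    Aelt * (us i.castSucc : U) - us i.castSucc * Aelt = (1 - qq⁻¹ ^ 2) ^ 2 • (us i.succ : U) := by
  have hc := one_sub_qq_inv_sq_ne_zero
  fin_cases i
  · have := commutator_inv_pow_smul hc Aelt v0 0
    rwa [pow_zero, one_smul] at this
  · exact commutator_inv_pow_smul hc Aelt v1 2
  · exact commutator_inv_pow_smul hc Aelt v2 4

theorem straighteningRel_us
    (h : ∀ i : Fin 3, us i.castSucc * us i.succ = (qq ^ 2)⁻¹ • (us i.succ * us i.castSucc)) :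
    StraighteningRel (qq ^ 2) us :=
  .of_map (f := Sgen.val) Subtype.val_injective (.of_derivation (mulLeft_sub_mulRight_mul Aelt)
    (pow_ne_zero 2 one_sub_qq_inv_sq_ne_zero) commutator_us (pow_ne_zero 2 qq_ne_zero)
    fun i => congrArg Subtype.val (h i))

theorem mul_eval₂_smul_mem_closure {K M ι : Type*} [Field K] [AddCommGroup M] [Module K M] {q : K}
    {E : ι → M} {s : Set ι} {b : ι} (hb : b ∈ s) (p : ℤ[X]) :
    (q * p.eval₂ (Int.castRingHom K) q) • E b
      ∈ AddSubgroup.closure {y | ∃ k : ℤ, ∃ b, 1 ≤ k ∧ b ∈ s ∧ y = q ^ k • E b} := by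
  rw [eval₂_eq_sum_range, Finset.mul_sum, Finset.sum_smul]
  refine sum_mem fun i _ => ?_
  have hterm : (q * (Int.castRingHom K (p.coeff i) * q ^ i)) • E b
      = p.coeff i • (q ^ ((i + 1 : ℕ) : ℤ) • E b) := by
    rw [← Int.cast_smul_eq_zsmul K, smul_smul, zpow_natCast, pow_succ', eq_intCast]
    congr 1
    ring
  rw [hterm]
  refine zsmul_mem (AddSubgroup.subset_closure ?_) _
  exact ⟨_, b, by lia, hb, rfl⟩

variable {bar : F →+* F} {σ : Sgen → Sgen} {B : Idx → Sgen}

/-- `σ` as a map semilinear over `bar`. -/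
def SigmaHyp.toLinearMap (hσ : SigmaHyp bar σ) : Sgen →ₛₗ[bar] Sgen where
  toFun := σ
  map_add' := hσ.2.2.1
  map_smul' := hσ.2.2.2.2.1

theorem SigmaHyp.isTwistedAntiHom (hσ : SigmaHyp bar σ) :
    IsTwistedAntiHom qq hσ.toLinearMap us := by
  obtain ⟨bar_q, bijective, -, map_mul, -, map_us0, map_us1, map_us2, map_us3⟩ := id hσ
  refine ⟨bar_q, ?_, map_mul, fun i => ?_⟩
  · obtain ⟨e, he⟩ := bijective.surjective 1
    have := map_mul e 1
    rw [mul_one, he, mul_one] at this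
    exact this.symm
  · fin_cases i
    · exact map_us0.trans (one_smul F us0).symm
    exacts [map_us1, map_us2, map_us3]

theorem DCB.isDualCanonical (hB : DCB bar σ B) (hPBW : LinearIndependent F mon)
    (hσ : SigmaHyp bar σ) : IsDualCanonical qq hσ.toLinearMap (dualPBW qq us) B where
  linearIndependent := linearIndependent_dualPBW_us hPBW
  sub_mem_closure a := by
    obtain ⟨φ, hφ, hsum⟩ := (hB a).1
    rw [show dualPBW qq us a = Ee a from rfl, hsum]
    exact sum_mem fun b hb => mul_eval₂_smul_mem_closure (hφ hb) _
  map_eq a := (hB a).2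

theorem Bz_eq {a : ℤ × ℤ × ℤ × ℤ} {b : Idx}
    (h : a.1 = b.1 ∧ a.2.1 = b.2.1 ∧ a.2.2.1 = b.2.2.1 ∧ a.2.2.2 = b.2.2.2) : Bz B a = B b := by
  simp [Bz, h]

end Quantum

/-- For every `n ≥ 1` the dual canonical basis elements satisfy
`B[n,0,0,n−1] = q^{n−1} u₃ B[n−1,0,0,n−1] − q^{2n−1} u₂ B[n−1,0,1,n−2]`
`= q^{3n−3} B[n−1,0,0,n−1] u₃ − q^{2n−3} B[n−1,0,1,n−2] u₂`. -/
theorem stmt10 (bar : F →+* F) (σ : Sgen → Sgen) (B : Idx → Sgen)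
    (hPBW : LinearIndependent F mon) (hσ : SigmaHyp bar σ) (hB : DCB bar σ B) (n : ℕ) (hn : 1 ≤ n) :
    Bz B ((n : ℤ), 0, 0, (n : ℤ) - 1)
        = qq ^ ((n : ℤ) - 1) • (us3 * Bz B ((n : ℤ) - 1, 0, 0, (n : ℤ) - 1))
          - qq ^ (2 * (n : ℤ) - 1) • (us2 * Bz B ((n : ℤ) - 1, 0, 1, (n : ℤ) - 2)) ∧
    Bz B ((n : ℤ), 0, 0, (n : ℤ) - 1)
        = qq ^ (3 * (n : ℤ) - 3) • (Bz B ((n : ℤ) - 1, 0, 0, (n : ℤ) - 1) * us3)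
          - qq ^ (2 * (n : ℤ) - 3) • (Bz B ((n : ℤ) - 1, 0, 1, (n : ℤ) - 2) * us2) := by
  have hdc := hB.isDualCanonical hPBW hσ
  have hq := transcendental_int_qq
  have hτ := hσ.isTwistedAntiHom
  have H := straighteningRel_us (hdc.gen_mul_gen_succ hτ qq_ne_zero)
  obtain _ | _ | k := n
  · exact absurd hn (by decide)
  · have hstep : Bz B ((1 : ℕ), 0, 0, (1 : ℕ) - 1) = us3 := by
      rw [Bz_eq (b := (1, 0, 0, 0)) (by simp), hdc.eq_x3 (x := us)]; rfl
    have hdiag : Bz B ((1 : ℕ) - 1, 0, 0, (1 : ℕ) - 1) = 1 := by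
      rw [Bz_eq (b := (0, 0, 0, 0)) (by simp), hdc.eq_one (x := us)]
    have hminor : Bz B ((1 : ℕ) - 1, 0, 1, (1 : ℕ) - 2) = 0 := if_neg (by simp)
    rw [zero_add, hstep, hdiag, hminor]
    simp only [Nat.cast_one, sub_self, mul_one, one_mul, zpow_zero, one_smul, mul_zero, zero_mul,
      smul_zero]
    exact ⟨(sub_zero us3).symm, (sub_zero us3).symm⟩
  · rw [Bz_eq (b := (k + 2, 0, 0, k + 1)) (by lia),
      Bz_eq (b := (k + 1, 0, 0, k + 1)) (by lia),
      Bz_eq (b := (k + 1, 0, 1, k)) (by lia)]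
    constructor
    · convert hdc.eq_mul_left_sub hq hτ H k using 4 <;> first | lia | rfl
    · convert hdc.eq_mul_right_sub hq hτ H k using 4 <;> first | lia | rfl
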